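/- arXiv:2405.20480 — 2 statements merged into one kernel-verified Lean document; each statement's English description precedes it below -/
import Mathlib

section
/- Let G = ([n], E) be a finite simple graph and let d ≥ pmd(G) + k(G) + 1. Then the Lovász–Saks–Schrijver ring R_G(d) is a unique factorization domain. -/
open MvPolynomial

/-- The Lovász–Saks–Schrijver ideal `L_G(d)` of a simple graph `G`, inside the polynomial
ring `K[y_{ij} : i ∈ V, j ∈ [d]]`: it is generated by the polynomials
`f_{ij} = ∑_{k=1}^d y_{ik} y_{jk}` for the edges `{i,j}` of `G`. -/
noncomputable def lssIdeal (K : Type) [Field K] {V : Type} (G : SimpleGraph V) (d : ℕ) :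
    Ideal (MvPolynomial (V × Fin d) K) :=
  Ideal.span {f | ∃ i j : V, G.Adj i j ∧
    f = ∑ k : Fin d, MvPolynomial.X (i, k) * MvPolynomial.X (j, k)}

/-- The total weight `w(i) + w(j)` of an edge `e = {i,j}`. -/
noncomputable def edgeWeight {V : Type} (w : V → ℝ) : Sym2 V → ℝ :=
  Sym2.lift ⟨fun i j => w i + w j, fun i j => add_comm (w i) (w j)⟩

/-- `M` is a positive matching of the edge set `E`: `M ⊆ E` consists of pairwise disjoint
edges, and there is a weight function `w` with positive total weight exactly on the
edges of `M` and negative total weight on the edges of `E \ M`. -/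
def IsPositiveMatching {V : Type} (E M : Set (Sym2 V)) : Prop :=
  M ⊆ E ∧ (M.Pairwise fun e e' => ∀ v : V, ¬(v ∈ e ∧ v ∈ e')) ∧
    ∃ w : V → ℝ, (∀ e ∈ M, 0 < edgeWeight w e) ∧ ∀ e ∈ E \ M, edgeWeight w e < 0

/-- `F 0, …, F (p-1)` is a positive matching decomposition of the edge set `E`:
a partition of `E` into pairwise disjoint subsets such that `F i` is a positive matching
on the graph with edge set `E ∖ (F 0 ∪ ⋯ ∪ F (i-1))`. -/
def IsPMDecomposition {V : Type} (E : Set (Sym2 V)) {p : ℕ} (F : Fin p → Set (Sym2 V)) : Prop :=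
  (⋃ i, F i) = E ∧ (Pairwise fun i j => Disjoint (F i) (F j)) ∧
    ∀ i : Fin p, IsPositiveMatching (E \ ⋃ j : Fin p, ⋃ _ : j < i, F j) (F i)

/-- The positive matching decomposition number `pmd(G)`. -/
noncomputable def pmd {V : Type} (G : SimpleGraph V) : ℕ :=
  sInf {p | ∃ F : Fin p → Set (Sym2 V), IsPMDecomposition G.edgeSet F}

/-- The degeneracy `k(G)`: the least `k` such that every (nonempty) induced subgraph of `G`
has a vertex of degree at most `k`. -/
noncomputable def degeneracy {V : Type} (G : SimpleGraph V) : ℕ :=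
  sInf {k | ∀ s : Set V, s.Nonempty → ∃ v ∈ s, {u | u ∈ s ∧ G.Adj v u}.ncard ≤ k}


/-- `R` is presented over `A` by generators `x` and linear relations with coefficients `M`. -/
structure LinPres {A R : Type} [CommRing A] [CommRing R] (φ : A →+* R) {m : ℕ} {τ : Type}
    [Fintype τ] (M : Fin m → τ → A) (x : τ → R) : Prop where
  gen : Function.Surjective (MvPolynomial.eval₂Hom φ x)
  rel : ∀ i, ∑ t, φ (M i t) * x t = 0
  univ : ∀ (B : Type) [CommRing B] (ψ : A →+* B) (z : τ → B),
    (∀ i, ∑ t, ψ (M i t) * z t = 0) →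
      ∃ θ : R →+* B, (∀ a, θ (φ a) = ψ a) ∧ ∀ t, θ (x t) = z t

theorem LinPres.reindex {A R : Type} [CommRing A] [CommRing R] {φ : A →+* R} {m : ℕ}
    {τ τ' : Type} [Fintype τ] [Fintype τ'] {M : Fin m → τ → A} {x : τ → R}
    (h : LinPres φ M x) (e : τ' ≃ τ) : LinPres φ (fun i t => M i (e t)) (fun t => x (e t)) where
  gen := by
    intro r
    obtain ⟨q, hq⟩ := h.gen r
    refine ⟨MvPolynomial.rename e.symm q, ?_⟩
    rw [← hq]
    simp only [MvPolynomial.coe_eval₂Hom, MvPolynomial.eval₂_rename]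
    congr 1
    ext t
    simp
  rel i := by
    rw [← h.rel i]
    exact e.sum_comp (fun t => φ (M i t) * x t)
  univ B _ ψ z hz := by
    obtain ⟨θ, h1, h2⟩ := h.univ B ψ (fun t => z (e.symm t)) (fun i => by
      rw [← hz i, ← e.sum_comp]
      simp)
    exact ⟨θ, h1, fun t => by simp [h2]⟩

theorem scale_eq {A κ : Type} [CommRing A] (δ : A) (b : MvPolynomial κ A) (n : κ →₀ ℕ) :
    coeff n (eval₂Hom C (fun k => C δ * X k) b) = coeff n b * δ ^ n.degree := by
  classical
  induction b using MvPolynomial.induction_on' with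
  | monomial u a =>
    have : (eval₂Hom C (fun k => C δ * X k)) (monomial u a) = monomial u (a * δ ^ u.degree) := by
      rw [coe_eval₂Hom, eval₂_monomial]
      simp only [mul_pow]
      rw [Finsupp.prod_mul, monomial_eq, C_mul, mul_assoc]
      congr 2
      rw [Finsupp.prod, Finset.prod_pow_eq_pow_sum, C_pow]
      rfl
    rw [this, coeff_monomial, coeff_monomial]
    split_ifs with h
    · rw [h]
    · simp
  | add p q hp hq => simp only [map_add, coeff_add, hp, hq, add_mul]

/-- weak prime -/
def WPrime {A : Type} [CommRing A] (a : A) : Prop := ∀ x y, a ∣ x * y → a ∣ x ∨ a ∣ y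

theorem WPrime.pow {A : Type} [CommRing A] {a δ x : A} (ha : WPrime a) (hδ : ¬ a ∣ δ) (N : ℕ)
    (h : a ∣ x * δ ^ N) : a ∣ x := by
  induction N with
  | zero => simpa using h
  | succ N ih =>
    rw [pow_succ, ← mul_assoc] at h
    exact ih ((ha _ _ h).resolve_right hδ)

theorem scale_dvd {A κ : Type} [CommRing A] {a δ : A} (ha : WPrime a) (hδ : ¬ a ∣ δ)
    (b : MvPolynomial κ A) (h : C a ∣ eval₂Hom C (fun k => C δ * X k) b) : C a ∣ b := by
  rw [C_dvd_iff_dvd_coeff] at h ⊢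
  intro n
  have := h n
  rw [scale_eq] at this
  exact ha.pow hδ _ this

section core
variable {A R : Type} [CommRing A] [CommRing R] {φ : A →+* R} {m : ℕ} {κ : Type} [Fintype κ]
  {M : Fin m → (Fin m ⊕ κ) → A} {x : Fin m ⊕ κ → R}

theorem LinPres.cramer (h : LinPres φ M x) (i : Fin m) :
    ∃ b : MvPolynomial κ A, φ (Matrix.det (fun i j => M i (Sum.inl j))) * x (Sum.inl i) =
      eval₂Hom φ (fun k => x (Sum.inr k)) b := by
  set N : Matrix (Fin m) (Fin m) A := fun i j => M i (Sum.inl j) with hN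
  refine ⟨- ∑ j, C (N.adjugate i j) * ∑ k, C (M j (Sum.inr k)) * X k, ?_⟩
  have h1 : ∀ j, ∑ l, φ (N j l) * x (Sum.inl l) = - ∑ k, φ (M j (Sum.inr k)) * x (Sum.inr k) := by
    intro j
    have := h.rel j
    rw [Fintype.sum_sum_type] at this
    exact eq_neg_of_add_eq_zero_left this
  have h2 : ∑ j, φ (N.adjugate i j) * ∑ l, φ (N j l) * x (Sum.inl l)
      = φ N.det * x (Sum.inl i) := by
    simp only [Finset.mul_sum]
    rw [Finset.sum_comm]
    simp only [← mul_assoc, ← Finset.sum_mul, ← map_mul, ← map_sum]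
    have : ∀ l, ∑ j, N.adjugate i j * N j l = if i = l then N.det else 0 := by
      intro l
      have := congrFun (congrFun (Matrix.adjugate_mul N) i) l
      rw [Matrix.mul_apply] at this
      rw [this]
      simp [Matrix.one_apply]
    simp [this, apply_ite φ, ite_mul]
  rw [← h2]
  simp only [h1, map_neg, map_sum, map_mul, eval₂Hom_C, eval₂Hom_X', mul_neg,
    Finset.sum_neg_distrib]

theorem LinPres.cramer_all (h : LinPres φ M x) (r : R) :
    ∃ (n : ℕ) (b : MvPolynomial κ A), φ (Matrix.det (fun i j => M i (Sum.inl j))) ^ n * r =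
      eval₂Hom φ (fun k => x (Sum.inr k)) b := by
  obtain ⟨q, rfl⟩ := h.gen r
  set δ := Matrix.det (fun i j => M i (Sum.inl j)) with hδ
  induction q using MvPolynomial.induction_on with
  | C a => exact ⟨0, C a, by simp⟩
  | add p q hp hq =>
    obtain ⟨n1, b1, h1⟩ := hp
    obtain ⟨n2, b2, h2⟩ := hq
    refine ⟨n1 + n2, C δ ^ n2 * b1 + C δ ^ n1 * b2, ?_⟩
    simp only [map_add, map_mul, map_pow, ← h1, ← h2, eval₂Hom_C]
    ring
  | mul_X p t hp =>
    obtain ⟨n1, b1, h1⟩ := hp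
    rcases t with i | k
    · obtain ⟨b, hb⟩ := h.cramer i
      refine ⟨n1 + 1, b1 * b, ?_⟩
      simp only [map_mul, ← h1, ← hb, eval₂Hom_X', ← hδ]
      ring
    · refine ⟨n1, b1 * X k, ?_⟩
      simp only [map_mul, ← h1, eval₂Hom_X']
      ring

theorem LinPres.exists_theta (h : LinPres φ M x) :
    ∃ θ : R →+* MvPolynomial κ A, (∀ a, θ (φ a) = C a) ∧
      ∀ b, θ (eval₂Hom φ (fun k => x (Sum.inr k)) b) =
       eval₂Hom C (fun k => C (Matrix.det (fun i j => M i (Sum.inl j))) * X k) b := by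
  set N : Matrix (Fin m) (Fin m) A := fun i j => M i (Sum.inl j) with hN
  obtain ⟨θ, h1, h2⟩ := h.univ (MvPolynomial κ A) C
    (Sum.elim (fun i => - ∑ j, C (N.adjugate i j) * ∑ k, C (M j (Sum.inr k)) * X k)
      (fun k => C N.det * X k)) (by
      intro l
      rw [Fintype.sum_sum_type]
      simp only [Sum.elim_inl, Sum.elim_inr]
      have h2 : ∑ i, C (N l i) * ∑ j, C (N.adjugate i j) * ∑ k, C (M j (Sum.inr k)) * X k
          = C N.det * ∑ k, (C (M l (Sum.inr k)) * X k : MvPolynomial κ A) := by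
        simp only [Finset.mul_sum (s := (Finset.univ : Finset (Fin m)))]
        rw [Finset.sum_comm]
        simp only [← mul_assoc, ← Finset.sum_mul, ← map_mul, ← map_sum]
        have : ∀ j, ∑ i, N l i * N.adjugate i j = if l = j then N.det else 0 := by
          intro j
          have := congrFun (congrFun (Matrix.mul_adjugate N) l) j
          rw [Matrix.mul_apply] at this
          rw [this]
          simp [Matrix.one_apply]
        simp only [this]
        simp [apply_ite, ite_mul]
      simp only [mul_neg, Finset.sum_neg_distrib]
      rw [show ∑ i, C (M l (Sum.inl i)) * ∑ j, C (N.adjugate i j) * ∑ k, C (M j (Sum.inr k)) * X k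
          = C N.det * ∑ k, (C (M l (Sum.inr k)) * X k : MvPolynomial κ A) from h2, Finset.mul_sum,
          neg_add_eq_zero]
      refine Finset.sum_congr rfl fun k _ => by ring)
  refine ⟨θ, h1, ?_⟩
  intro b
  induction b using MvPolynomial.induction_on with
  | C a => simp [h1]
  | add p q hp hq => simp only [map_add, hp, hq]
  | mul_X p t hp =>
    rw [map_mul, map_mul, hp, map_mul]
    congr 1
    simp [h2]

theorem LinPres.theta_dvd (h : LinPres φ M x) {a : A} (ha : WPrime a)
    (hδ : ¬ a ∣ Matrix.det (fun i j => M i (Sum.inl j)))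
    (hn : ∀ r, φ a ∣ φ (Matrix.det (fun i j => M i (Sum.inl j))) * r → φ a ∣ r)
    (hC : WPrime (C a : MvPolynomial κ A)) : WPrime (φ a) := by
  set δ := Matrix.det (fun i j => M i (Sum.inl j)) with hδ'
  obtain ⟨θ, h1, h2⟩ := h.exists_theta
  have hn' : ∀ (n : ℕ) r, φ a ∣ φ δ ^ n * r → φ a ∣ r := by
    intro n
    induction n with
    | zero => intro r hr; simpa using hr
    | succ n ih =>
      intro r hr
      rw [pow_succ, mul_assoc] at hr
      exact hn _ (ih _ hr)
  have key : ∀ r, C a ∣ θ r → φ a ∣ r := by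
    intro r hr
    obtain ⟨n, b, hb⟩ := h.cramer_all r
    apply hn' n
    rw [← hδ'] at hb
    rw [hb]
    have : C a ∣ b := by
      apply scale_dvd ha hδ
      rw [← h2, ← hb, map_mul]
      exact Dvd.dvd.mul_left hr _
    obtain ⟨c, rfl⟩ := this
    rw [map_mul, eval₂Hom_C]
    exact dvd_mul_right _ _
  intro r s hrs
  have := map_dvd θ hrs
  rw [h1, map_mul] at this
  exact (hC _ _ this).imp (key r) (key s)

theorem LinPres.inj (h : LinPres φ M x) [IsDomain A]
    (hδ : Matrix.det (fun i j => M i (Sum.inl j)) ≠ 0) :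
    Function.Injective (eval₂Hom φ (fun k => x (Sum.inr k))) := by
  obtain ⟨θ, h1, h2⟩ := h.exists_theta
  rw [injective_iff_map_eq_zero]
  intro b hb
  have h3 := h2 b
  rw [hb, map_zero] at h3
  have := scale_dvd (a := (0 : A)) (δ := Matrix.det (fun i j => M i (Sum.inl j)))
    (by intro x y; simp) (by simpa using hδ) b (by rw [← h3]; exact dvd_zero _)
  simpa using this

end core

/-- Nagata -/
theorem nagata_aux {R : Type} [CommRing R] [IsDomain R] [IsNoetherianRing R] (s : Multiset R)
    (hs : ∀ a ∈ s, Prime a) (P : Ideal R) [P.IsPrime] (hP : s.prod ∉ P) (q : R) (hq : q ∈ P)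
    (hq0 : q ≠ 0)
    (hw : ∀ x y, q ∣ x * y → ∃ n : ℕ, q ∣ s.prod ^ n * x ∨ q ∣ s.prod ^ n * y) :
    ∃ q ∈ P, Prime q := by
  let T : Set R := {q | q ∈ P ∧ q ≠ 0 ∧
    ∀ x y, q ∣ x * y → ∃ n : ℕ, q ∣ s.prod ^ n * x ∨ q ∣ s.prod ^ n * y}
  obtain ⟨q, ⟨hq, hq0, hw⟩, hmin⟩ :=
    (wellFounded_dvdNotUnit (α := R)).has_min T ⟨q, hq, hq0, hw⟩
  have hnd : ∀ a ∈ s, ¬ a ∣ q := by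
    rintro a ha ⟨q', rfl⟩
    have haP : a ∉ P := fun h => hP (P.mem_of_dvd (Multiset.dvd_prod ha) h)
    have hq' : q' ∈ P := (Ideal.IsPrime.mem_or_mem ‹_› hq).resolve_left haP
    have ha0 := (hs a ha).ne_zero
    refine hmin q' ⟨hq', right_ne_zero_of_mul hq0, ?_⟩ ⟨right_ne_zero_of_mul hq0, a,
      (hs a ha).not_isUnit, mul_comm _ _⟩
    intro x y hxy
    obtain ⟨n, h⟩ := hw (a * x) y (by rw [mul_assoc]; exact mul_dvd_mul_left _ hxy)
    refine ⟨n, h.imp (fun h => ?_) (fun h => ?_)⟩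
    · rw [mul_left_comm] at h
      exact (mul_dvd_mul_iff_left ha0).1 h
    · exact (dvd_mul_left _ _).trans h
  have hcancel : ∀ u : Multiset R, (∀ a ∈ u, a ∈ s) → ∀ r, q ∣ u.prod * r → q ∣ r := by
    intro u
    induction u using Multiset.induction_on with
    | empty => intro _ r h; simpa using h
    | cons a u ih =>
      intro hu r h
      rw [Multiset.prod_cons, mul_assoc] at h
      refine ih (fun b hb => hu b (Multiset.mem_cons_of_mem hb)) r ?_
      have ha := hu a (Multiset.mem_cons_self _ _)
      obtain ⟨t, ht⟩ := h
      obtain ⟨t', rfl⟩ := ((hs a ha).dvd_or_dvd (ht ▸ dvd_mul_right a _)).resolve_left (hnd a ha)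
      rw [mul_left_comm q] at ht
      exact ⟨t', mul_left_cancel₀ (hs a ha).ne_zero ht⟩
  have hc2 : ∀ (n : ℕ) r, q ∣ s.prod ^ n * r → q ∣ r := by
    intro n
    induction n with
    | zero => intro r h; simpa using h
    | succ n ih =>
      intro r hr
      rw [pow_succ, mul_assoc] at hr
      exact hcancel s (fun _ h => h) _ (ih _ hr)
  refine ⟨q, hq, hq0, ?_, ?_⟩
  · intro hu
    exact Ideal.IsPrime.ne_top ‹P.IsPrime› (P.eq_top_of_isUnit_mem hq hu)
  · intro x y hxy
    obtain ⟨n, h⟩ := hw x y hxy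
    exact h.imp (hc2 n x) (hc2 n y)

theorem nagata {B R : Type} [CommRing B] [IsDomain B] [UniqueFactorizationMonoid B]
    [CommRing R] [IsDomain R] [IsNoetherianRing R]
    (ι : B →+* R) (hι : Function.Injective ι) (s : Multiset B)
    (hs : ∀ a ∈ s, Prime (ι a)) (hB : ∀ r, ∃ (n : ℕ) (b : B), ι s.prod ^ n * r = ι b) :
    UniqueFactorizationMonoid R := by
  rw [UniqueFactorizationMonoid.iff_exists_prime_mem_of_isPrime]
  intro P hP0 hP
  have hsp : (s.map ι).prod = ι s.prod := by rw [map_multiset_prod]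
  by_cases hD : ι s.prod ∈ P
  · rw [← hsp] at hD
    obtain ⟨a, ha, haP⟩ := (hP.multiset_prod_mem_iff_exists_mem (s.map ι)).1 (by simpa using hD)
    obtain ⟨b, hb, rfl⟩ := Multiset.mem_map.1 ha
    exact ⟨_, haP, hs b hb⟩
  · have hpow : ∀ n : ℕ, ι s.prod ^ n ∉ P := fun n h => hD (hP.mem_of_pow_mem n h)
    have hD0 : ι s.prod ≠ 0 := fun h => hD (h ▸ P.zero_mem)
    have hcom : P.comap ι ≠ ⊥ := by
      obtain ⟨r, hr, hr0⟩ := Submodule.exists_mem_ne_zero_of_ne_bot hP0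
      obtain ⟨n, b, hb⟩ := hB r
      intro h
      have : b ∈ P.comap ι := by
        rw [Ideal.mem_comap, ← hb]
        exact P.mul_mem_left _ hr
      rw [h, Ideal.mem_bot] at this
      rw [this, map_zero] at hb
      exact mul_ne_zero (pow_ne_zero _ hD0) hr0 hb
    obtain ⟨q, hq, hqp⟩ := Ideal.IsPrime.exists_mem_prime_of_ne_bot
      (Ideal.IsPrime.comap ι (K := P)) hcom
    refine nagata_aux (s.map ι) (by
      intro a ha
      obtain ⟨b, hb, rfl⟩ := Multiset.mem_map.1 ha
      exact hs b hb) P (by rwa [hsp]) (ι q) hq ?_ ?_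
    · intro h
      exact hqp.ne_zero (hι (by rw [h, map_zero]))
    · rintro x y ⟨t, ht⟩
      rw [hsp]
      obtain ⟨n1, b1, h1⟩ := hB x
      obtain ⟨n2, b2, h2⟩ := hB y
      obtain ⟨n3, b3, h3⟩ := hB t
      have : q ∣ s.prod ^ n3 * (b1 * b2) := by
        refine ⟨s.prod ^ (n1 + n2) * b3, hι ?_⟩
        simp only [map_mul, map_pow, ← h1, ← h2, ← h3]
        linear_combination (ι s.prod) ^ (n1 + n2 + n3) * ht
      rcases hqp.dvd_or_dvd this with h | h
      · exact absurd (P.mem_of_dvd (map_dvd ι h) hq) (by rw [map_pow]; exact hpow _)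
      · rcases hqp.dvd_or_dvd h with h | h
        · exact ⟨n1, Or.inl (h1 ▸ map_dvd ι h)⟩
        · exact ⟨n2, Or.inr (h2 ▸ map_dvd ι h)⟩

theorem LinPres.domain {A R : Type} [CommRing A] [CommRing R] {φ : A →+* R} {m : ℕ}
    {τ : Type} [Fintype τ] {M : Fin m → τ → A} {x : τ → R} [IsDomain A]
    (h : LinPres φ M x) (c : Fin m → τ) (hc : Function.Injective c)
    (hn : ∀ r, φ (Matrix.det (fun i j => M i (c j))) * r = 0 → r = 0) : IsDomain R := by
  classical
  obtain ⟨ρ, hρ, -⟩ := h.univ A (RingHom.id A) 0 (by simp)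
  have : Nontrivial R := ρ.domain_nontrivial
  have hδ : Matrix.det (fun i j => M i (c j)) ≠ 0 := by
    intro h0
    exact one_ne_zero (hn 1 (by rw [h0]; simp))
  let e : Fin m ⊕ ↥(Set.range c)ᶜ ≃ τ :=
    (Equiv.sumCongr (Equiv.ofInjective c hc) (Equiv.refl _)).trans (Equiv.Set.sumCompl _)
  have hec : ∀ j, e (Sum.inl j) = c j := fun j => rfl
  have h' := h.reindex e
  have hw := h'.theta_dvd (a := 0) (by intro x y; simp) (by simpa [hec] using hδ)
    (by simpa [hec] using hn) (by intro x y; simp)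
  have : NoZeroDivisors R := ⟨by
    intro a b hab
    have := hw a b
    simp only [map_zero, zero_dvd_iff] at this
    exact this hab⟩
  exact NoZeroDivisors.to_isDomain R

theorem LinPres.ufd {A R : Type} [CommRing A] [CommRing R] {φ : A →+* R} {m : ℕ}
    {τ : Type} [Fintype τ] {M : Fin m → τ → A} {x : τ → R} [IsDomain A]
    [UniqueFactorizationMonoid A] [IsNoetherianRing R]
    (h : LinPres φ M x) (c c' : Fin m → τ) (hc : Function.Injective c)
    (hc' : Function.Injective c')
    (hn : ∀ r, φ (Matrix.det (fun i j => M i (c j))) * r = 0 → r = 0)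
    (hn' : ∀ r, φ (Matrix.det (fun i j => M i (c j))) ∣ φ (Matrix.det (fun i j => M i (c' j))) * r →
      φ (Matrix.det (fun i j => M i (c j))) ∣ r) :
    ∃ _ : IsDomain R, UniqueFactorizationMonoid R := by
  classical
  have hR := h.domain c hc hn
  refine ⟨hR, ?_⟩
  obtain ⟨ρ, hρ, -⟩ := h.univ A (RingHom.id A) 0 (by simp)
  simp only [RingHom.id_apply] at hρ
  have hδ : Matrix.det (fun i j => M i (c j)) ≠ 0 := by
    intro h0
    exact one_ne_zero (hn 1 (by rw [h0]; simp))
  have hφ : Function.Injective φ := Function.LeftInverse.injective hρ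
  have hdv : ∀ a b, φ a ∣ φ b → a ∣ b := by
    intro a b hab
    simpa [hρ] using map_dvd ρ hab
  -- prime factors of the minor stay prime
  have hprime : ∀ a, Prime a → a ∣ Matrix.det (fun i j => M i (c j)) → Prime (φ a) := by
    intro a ha had
    obtain ⟨b, hb⟩ := had
    have hb0 : φ b ≠ 0 := by
      intro h0
      rw [map_eq_zero_iff φ hφ] at h0
      exact hδ (by rw [hb, h0, mul_zero])
    have ha0 : φ a ≠ 0 := by
      intro h0
      rw [map_eq_zero_iff φ hφ] at h0
      exact ha.ne_zero h0
    have hreg : ∀ r, φ a ∣ φ (Matrix.det (fun i j => M i (c' j))) * r → φ a ∣ r := by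
      intro r hr
      have := hn' (φ b * r) (by
        rw [hb, map_mul, mul_left_comm, mul_comm (φ a)]
        exact mul_dvd_mul_left _ hr)
      rw [hb, map_mul, mul_comm (φ a)] at this
      exact (mul_dvd_mul_iff_left hb0).1 this
    have hnu : ¬ φ a ∣ 1 := by
      intro h1
      rw [← map_one φ] at h1
      exact ha.not_isUnit (isUnit_of_dvd_one (hdv _ _ h1))
    have hnd : ¬ a ∣ Matrix.det (fun i j => M i (c' j)) := by
      intro h1
      apply hnu
      apply hreg
      rw [mul_one]
      exact map_dvd φ h1
    let e : Fin m ⊕ ↥(Set.range c')ᶜ ≃ τ :=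
      (Equiv.sumCongr (Equiv.ofInjective c' hc') (Equiv.refl _)).trans (Equiv.Set.sumCompl _)
    have hec : ∀ j, e (Sum.inl j) = c' j := fun j => rfl
    have h' := h.reindex e
    have hw := h'.theta_dvd (a := a) (fun x y => ha.dvd_or_dvd) hnd hreg
      (fun x y => (prime_C_iff _ |>.2 ha).dvd_or_dvd)
    exact ⟨ha0, fun hu => hnu hu.dvd, hw⟩
  let e : Fin m ⊕ ↥(Set.range c)ᶜ ≃ τ :=
    (Equiv.sumCongr (Equiv.ofInjective c hc) (Equiv.refl _)).trans (Equiv.Set.sumCompl _)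
  have hec : ∀ j, e (Sum.inl j) = c j := fun j => rfl
  have h' := h.reindex e
  obtain ⟨f, hf, u, hu⟩ := UniqueFactorizationMonoid.exists_prime_factors _ hδ
  refine nagata (eval₂Hom φ (fun k => x (e (Sum.inr k)))) (h'.inj hδ) (f.map C) ?_ ?_
  · intro a ha
    obtain ⟨b, hb, rfl⟩ := Multiset.mem_map.1 ha
    rw [eval₂Hom_C]
    refine hprime b (hf b hb) ?_
    rw [← hu]
    exact (Multiset.dvd_prod hb).mul_right _
  · intro r
    obtain ⟨n, b, hb⟩ := h'.cramer_all r
    refine ⟨n, b * C ((u⁻¹ : Aˣ) : A) ^ n, ?_⟩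
    have : (f.map (C : A →+* MvPolynomial ↥(Set.range c)ᶜ A)).prod = C f.prod := by
      rw [map_multiset_prod]
    rw [this, eval₂Hom_C, map_mul, ← hb, map_pow, eval₂Hom_C]
    have h3 : f.prod = Matrix.det (fun i j => M i (c j)) * ((u⁻¹ : Aˣ) : A) := by
      rw [← hu]; simp
    rw [h3, map_mul]
    simp only [hec]
    ring

section groebner
variable {σ : Type} {K : Type} [Field K] (m : MonomialOrder σ)
open scoped MonomialOrder

theorem le_of_le_add_disj {f a b : σ →₀ ℕ} (h : f ≤ a + b) (hd : Disjoint f.support b.support) :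
    f ≤ a := by
  intro s
  by_cases hs : b s = 0
  · have := h s
    simpa [hs] using this
  · have : f s = 0 := by
      by_contra h0
      exact (Finset.disjoint_left.1 hd) (Finsupp.mem_support_iff.2 h0) (Finsupp.mem_support_iff.2 hs)
    rw [this]
    exact Nat.zero_le _

theorem exists_reduced (P : Finset (MvPolynomial σ K)) (h0 : ∀ f ∈ P, f ≠ 0)
    (g : MvPolynomial σ K) : ∃ r, g - r ∈ Ideal.span (P : Set (MvPolynomial σ K)) ∧
      ∀ c ∈ r.support, ∀ b ∈ P, ¬ (m.degree b ≤ c) := by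
  obtain ⟨q, r, h1, -, h2⟩ := m.div_set (B := (P : Set (MvPolynomial σ K)))
    (fun b hb => isUnit_iff_ne_zero.2 (m.leadingCoeff_ne_zero_iff.2 (h0 b hb))) g
  refine ⟨r, ?_, h2⟩
  rw [h1, add_sub_cancel_right, Finsupp.linearCombination_apply]
  refine Submodule.sum_mem _ fun b _ => ?_
  exact Ideal.mul_mem_left _ _ (Ideal.subset_span b.2)

theorem groebner_coprime (P : Finset (MvPolynomial σ K)) (h0 : ∀ f ∈ P, f ≠ 0)
    (hc : ∀ f ∈ P, ∀ g ∈ P, f ≠ g → Disjoint (m.degree f).support (m.degree g).support)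
    (h : MvPolynomial σ K) (hh : h ∈ Ideal.span (P : Set (MvPolynomial σ K))) (hne : h ≠ 0) :
    ∃ f ∈ P, m.degree f ≤ m.degree h := by
  classical
  induction P using Finset.induction_on generalizing h with
  | empty => simp at hh; exact absurd hh hne
  | insert f P hf ih =>
    have h0' : ∀ g ∈ P, g ≠ 0 := fun g hg => h0 g (Finset.mem_insert_of_mem hg)
    have ih' := ih h0' (fun a ha b hb => hc a (Finset.mem_insert_of_mem ha) b
      (Finset.mem_insert_of_mem hb))
    rw [Finset.coe_insert, Ideal.mem_span_insert] at hh
    obtain ⟨q, z, hz, rfl⟩ := hh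
    obtain ⟨r, hr1, hr2⟩ := exists_reduced m P h0' q
    have hz' : z + (q - r) * f ∈ Ideal.span (P : Set (MvPolynomial σ K)) :=
      Ideal.add_mem _ hz (Ideal.mul_mem_right _ _ hr1)
    set g := z + (q - r) * f with hg
    have heq : q * f + z = g + r * f := by rw [hg]; ring
    rw [heq] at hne ⊢
    have hf0 := h0 f (Finset.mem_insert_self _ _)
    by_cases hr0 : r = 0
    · rw [hr0, zero_mul, add_zero] at hne ⊢
      obtain ⟨a, ha, hle⟩ := ih' g hz' hne
      exact ⟨a, Finset.mem_insert_of_mem ha, hle⟩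
    by_cases hg0 : g = 0
    · rw [hg0, zero_add]
      refine ⟨f, Finset.mem_insert_self _ _, ?_⟩
      rw [m.degree_mul hr0 hf0]
      exact le_add_self
    obtain ⟨a, ha, hle⟩ := ih' g hz' hg0
    have hneq : m.degree g ≠ m.degree (r * f) := by
      intro he
      rw [he, m.degree_mul hr0 hf0] at hle
      have hd := hc a (Finset.mem_insert_of_mem ha) f (Finset.mem_insert_self _ _)
        (fun h => hf (h ▸ ha))
      exact hr2 _ (m.degree_mem_support hr0) a ha (le_of_le_add_disj hle hd)
    rcases lt_or_gt_of_ne (fun h => hneq (m.toSyn.injective h)) with hlt | hlt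
    · rw [m.degree_add_eq_right_of_lt hlt]
      refine ⟨f, Finset.mem_insert_self _ _, ?_⟩
      rw [m.degree_mul hr0 hf0]
      exact le_add_self
    · rw [m.degree_add_of_lt hlt]
      exact ⟨a, Finset.mem_insert_of_mem ha, hle⟩

theorem nzd_coprime (P : Finset (MvPolynomial σ K)) (h0 : ∀ f ∈ P, f ≠ 0)
    (hc : ∀ f ∈ P, ∀ g ∈ P, f ≠ g → Disjoint (m.degree f).support (m.degree g).support)
    (f : MvPolynomial σ K) (hf0 : f ≠ 0)
    (hf : ∀ g ∈ P, Disjoint (m.degree g).support (m.degree f).support)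
    (g : MvPolynomial σ K) (hg : f * g ∈ Ideal.span (P : Set (MvPolynomial σ K))) :
    g ∈ Ideal.span (P : Set (MvPolynomial σ K)) := by
  obtain ⟨r, hr1, hr2⟩ := exists_reduced m P h0 g
  have hr3 : r * f ∈ Ideal.span (P : Set (MvPolynomial σ K)) := by
    have : r * f = f * g - f * (g - r) := by ring
    rw [this]
    exact Ideal.sub_mem _ hg (Ideal.mul_mem_left _ _ hr1)
  by_cases hr0 : r = 0
  · simpa [hr0] using hr1
  obtain ⟨a, ha, hle⟩ := groebner_coprime m P h0 hc _ hr3 (mul_ne_zero hr0 hf0)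
  rw [m.degree_mul hr0 hf0] at hle
  exact absurd (le_of_le_add_disj hle (hf a ha)) (hr2 _ (m.degree_mem_support hr0) a ha)

theorem degree_sum_monomial {ι : Type} [Fintype ι] (μ : ι → σ →₀ ℕ) (c : ι → K) (k0 : ι)
    (hc : c k0 ≠ 0) (hlt : ∀ k, k ≠ k0 → μ k ≺[m] μ k0) :
    (∑ k, monomial (μ k) (c k)) ≠ 0 ∧ m.degree (∑ k, monomial (μ k) (c k)) = μ k0 := by
  classical
  have hco : coeff (μ k0) (∑ k, monomial (μ k) (c k)) = c k0 := by
    rw [coeff_sum, Finset.sum_eq_single k0]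
    · simp
    · intro k _ hk
      rw [coeff_monomial, if_neg]
      intro h
      have := hlt k hk
      rw [h] at this
      exact lt_irrefl _ this
    · simp
  have hs : μ k0 ∈ (∑ k, monomial (μ k) (c k)).support := by
    rw [mem_support_iff, hco]; exact hc
  refine ⟨fun h => ?_, m.toSyn.injective (le_antisymm ?_ (m.le_degree hs))⟩
  · rw [h] at hs; simp at hs
  · rw [m.degree_le_iff]
    intro a ha
    obtain ⟨k, -, hk⟩ := Finset.mem_biUnion.1 (support_sum ha)
    have := support_monomial_subset hk
    rw [Finset.mem_singleton] at this
    subst this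
    by_cases hk : k = k0
    · rw [hk]
    · exact (hlt k hk).le
end groebner

section order
variable {σ : Type} [Fintype σ]

/-- weight -/
noncomputable def wt (W : ℕ → σ → ℝ) : (σ →₀ ℕ) →+ Lex (ℕ → ℝ) where
  toFun a := toLex fun n => ∑ s, W n s * (a s : ℝ)
  map_zero' := by
    simp; rfl
  map_add' a b := by
    rw [← toLex_add]
    congr 1
    ext n
    simp [mul_add, Finset.sum_add_distrib]

/-- type synonym carrying the weight order -/
structure WSyn (W : ℕ → σ → ℝ) where
  /-- exponent -/
  val : σ →₀ ℕ

theorem exists_order [DecidableEq σ] (W : ℕ → σ → ℝ) (h0 : ∀ s, W 0 s = 1)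
    (hinj : ∀ s, ∃ n, ∀ t, W n t = if t = s then 1 else 0) :
    ∃ m : MonomialOrder.{0, 0} σ, ∀ a b : σ →₀ ℕ, wt W a < wt W b → m.toSyn a < m.toSyn b := by
  classical
  have hi : Function.Injective (wt W) := by
    intro a b hab
    ext s
    obtain ⟨n, hn⟩ := hinj s
    have := congrFun (congrArg ofLex hab) n
    simpa [wt, hn] using this
  have hdeg : ∀ a b : σ →₀ ℕ, wt W a ≤ wt W b → a.degree ≤ b.degree := by
    intro a b hab
    have : (ofLex (wt W a)) 0 ≤ (ofLex (wt W b)) 0 := by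
      rcases hab.eq_or_lt with h | h
      · rw [h]
      · obtain ⟨n, h1, h2⟩ := h
        rcases Nat.eq_zero_or_pos n with rfl | hn
        · exact h2.le
        · exact (h1 0 hn).le
    simp only [wt, h0, AddMonoidHom.coe_mk, ZeroHom.coe_mk, ofLex_toLex, one_mul] at this
    rw [Finsupp.degree_eq_sum, Finsupp.degree_eq_sum]
    exact_mod_cast this
  let S : Type := WSyn W
  let eqv : S ≃ (σ →₀ ℕ) := ⟨fun a => a.val, fun a => ⟨a⟩, fun _ => rfl, fun _ => rfl⟩
  let _acm : AddCommMonoid S := eqv.addCommMonoid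
  let ea : S ≃+ (σ →₀ ℕ) := eqv.addEquiv
  let F : S →+ Lex (ℕ → ℝ) := (wt W).comp ea.toAddMonoidHom
  let _lo : LinearOrder S := LinearOrder.lift' F (hi.comp ea.injective)
  have hle : ∀ a b : S, a ≤ b ↔ F a ≤ F b := fun a b => Iff.rfl
  have iso : IsOrderedAddMonoid S := ⟨by
    intro a b hab c
    rw [hle] at hab ⊢
    rw [map_add, map_add]
    exact add_le_add_left hab _, by
    intro a b hab c
    rw [hle] at hab ⊢
    rw [map_add, map_add]
    exact add_le_add_right hab _⟩
  have wf : WellFoundedLT S := by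
    have hfin : ∀ a : S, (Set.Iio a).Finite := by
      intro a
      have : (Set.Iic (Finsupp.equivFunOnFinite.symm fun _ : σ => (Finsupp.degree a.val))).Finite :=
        Set.finite_Iic _
      refine (this.preimage (f := fun b : S => b.val) (eqv.injective.injOn)).subset ?_
      intro b hb
      have h1 := hdeg b.val a.val ((hle b a).1 (le_of_lt hb))
      intro s
      exact (Finsupp.le_degree s b.val).trans h1
    refine ⟨Subrelation.wf (r := InvImage (· < ·) fun a : S => (Set.Iio a).ncard) ?_
      (InvImage.wf _ wellFounded_lt)⟩
    intro a b hab
    refine Set.ncard_lt_ncard ?_ (hfin b)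
    exact Set.Iio_ssubset_Iio hab
  refine ⟨{ syn := S, toSyn := ea.symm, toSyn_monotone := ?_ }, ?_⟩
  · intro a b hab
    obtain ⟨c, rfl⟩ := exists_add_of_le hab
    change wt W a ≤ wt W (a + c)
    by_contra hcon
    rw [not_le] at hcon
    have h1 := hdeg _ _ hcon.le
    rw [map_add] at h1
    have hc : c = 0 := by
      have : c.degree = 0 := by omega
      exact (Finsupp.degree_eq_zero_iff c).1 this
    rw [hc, add_zero] at hcon
    exact lt_irrefl _ hcon
  · intro a b hab
    exact hab

/-- column weight -/
noncomputable def colwt {V : Type} [Fintype V] {d : ℕ} (w : ℕ → V → ℝ) (l : ℕ)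
    (a : V × Fin d →₀ ℕ) : ℝ :=
  ∑ s : V × Fin d, (if (s.2 : ℕ) = l then w l s.1 else 0) * (a s : ℝ)

theorem colwt_add {V : Type} [Fintype V] {d : ℕ} (w : ℕ → V → ℝ) (l : ℕ)
    (a b : V × Fin d →₀ ℕ) : colwt w l (a + b) = colwt w l a + colwt w l b := by
  simp [colwt, mul_add, Finset.sum_add_distrib]

theorem colwt_sum {V : Type} [Fintype V] {d : ℕ} (w : ℕ → V → ℝ) (l : ℕ) {ι : Type}
    (s : Finset ι) (a : ι → V × Fin d →₀ ℕ) :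
    colwt w l (∑ i ∈ s, a i) = ∑ i ∈ s, colwt w l (a i) := by
  classical
  induction s using Finset.induction_on with
  | empty => simp [colwt]
  | insert i s hi ih => rw [Finset.sum_insert hi, Finset.sum_insert hi, colwt_add, ih]

theorem colwt_single {V : Type} [Fintype V] {d : ℕ} (w : ℕ → V → ℝ) (l : ℕ)
    (s : V × Fin d) : colwt w l (Finsupp.single s 1) = if (s.2 : ℕ) = l then w l s.1 else 0 := by
  classical
  rw [colwt, Finset.sum_eq_single s]
  · simp
  · intro t _ ht
    rw [Finsupp.single_eq_of_ne ht]; simp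
  · simp

theorem exists_order_cols {V : Type} [Fintype V] {d : ℕ} (w : ℕ → V → ℝ) :
    ∃ m : MonomialOrder.{0, 0} (V × Fin d), ∀ a b : V × Fin d →₀ ℕ, a.degree = b.degree →
      ∀ l < d, (∀ l' < l, colwt w l' a = colwt w l' b) → colwt w l a < colwt w l b →
        m.toSyn a < m.toSyn b := by
  classical
  let e := Fintype.equivFin (V × Fin d)
  let W : ℕ → V × Fin d → ℝ := fun n s => if n = 0 then 1 else if n ≤ d then
    (if (s.2 : ℕ) = n - 1 then w (n - 1) s.1 else 0) else if (e s : ℕ) = n - 1 - d then 1 else 0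
  obtain ⟨m, hm⟩ := exists_order W (by intro s; simp [W]) (by
    intro s
    refine ⟨1 + d + e s, fun t => ?_⟩
    have h1 : 1 + d + (e s : ℕ) - 1 - d = e s := by omega
    have h2 : ¬ (1 + d + (e s : ℕ) ≤ d) := by omega
    have h3 : ¬ (1 + d + (e s : ℕ) = 0) := by omega
    simp only [W, h1, h2, h3, if_false, Fin.val_inj, e.injective.eq_iff])
  refine ⟨m, fun a b hab l hl h1 h2 => hm a b ?_⟩
  have hW0 : ∀ a : V × Fin d →₀ ℕ, ofLex (wt W a) 0 = (a.degree : ℝ) := by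
    intro a
    simp [wt, W, Finsupp.degree_eq_sum]
  have hWl : ∀ l < d, ∀ a : V × Fin d →₀ ℕ, ofLex (wt W a) (l + 1) = colwt w l a := by
    intro l hl a
    have : l + 1 ≤ d := hl
    simp [wt, W, colwt, this]
  refine ⟨l + 1, ?_, ?_⟩
  · intro j hj
    rcases j with _ | j
    · exact (hW0 a).trans ((congrArg _ hab).trans (hW0 b).symm)
    · exact (hWl j (by omega) a).trans ((h1 j (by omega)).trans (hWl j (by omega) b).symm)
  · exact ((hWl l hl a).trans_lt h2).trans_eq (hWl l hl b).symm
end order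
/-- Convenient form of a positive matching decomposition: weights `w` and edge labels `c`. -/
structure GoodPMD {V : Type} (G : SimpleGraph V) (p : ℕ) (w : ℕ → V → ℝ) (c : V → V → ℕ) :
    Prop where
  symm : ∀ i j, G.Adj i j → c i j = c j i
  lt : ∀ i j, G.Adj i j → c i j < p
  pos : ∀ i j, G.Adj i j → 0 < w (c i j) i + w (c i j) j
  neg : ∀ i j, G.Adj i j → ∀ l < c i j, w l i + w l j < 0
  mat : ∀ i j j', G.Adj i j → G.Adj i j' → c i j = c i j' → j = j'

section lead
variable {V : Type} [Fintype V] {K : Type} [Field K] {d : ℕ}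
open scoped MonomialOrder

theorem edge_degree {w : ℕ → V → ℝ} (mo : MonomialOrder.{0, 0} (V × Fin d))
    (hm : ∀ a b : V × Fin d →₀ ℕ, a.degree = b.degree →
      ∀ l < d, (∀ l' < l, colwt w l' a = colwt w l' b) → colwt w l a < colwt w l b →
        mo.toSyn a < mo.toSyn b) (i j : V) (l : Fin d) (hpos : 0 < w l i + w l j)
    (hneg : ∀ k : ℕ, k < l → w k i + w k j < 0) :
    (∑ k : Fin d, (X (i, k) * X (j, k) : MvPolynomial (V × Fin d) K)) ≠ 0 ∧
      mo.degree (∑ k : Fin d, (X (i, k) * X (j, k) : MvPolynomial (V × Fin d) K)) =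
        Finsupp.single (i, l) 1 + Finsupp.single (j, l) 1 := by
  have := degree_sum_monomial mo (K := K)
    (fun k : Fin d => Finsupp.single (i, k) 1 + Finsupp.single (j, k) 1) (fun _ => 1) l
    one_ne_zero (by
      intro k hk
      have hk' : (k : ℕ) ≠ l := fun h => hk (Fin.ext h)
      apply hm _ _ (by simp [map_add]) (min (k : ℕ) l) (by omega)
      · intro l' hl'
        have h1 : (k : ℕ) ≠ l' := by omega
        have h2 : (l : ℕ) ≠ l' := by omega
        simp [colwt_add, colwt_single, h1, h2]
      · rcases lt_or_gt_of_ne hk' with h | h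
        · rw [min_eq_left h.le]
          simp only [colwt_add, colwt_single, if_true, if_neg (Ne.symm hk')]
          simpa using hneg k h
        · rw [min_eq_right h.le]
          simp only [colwt_add, colwt_single, if_true, if_neg hk']
          simpa using hpos)
  have h2 : ∀ k : Fin d, (X (i, k) * X (j, k) : MvPolynomial (V × Fin d) K) =
      monomial (Finsupp.single (i, k) 1 + Finsupp.single (j, k) 1) 1 := by
    intro k
    rw [X, X, monomial_mul, one_mul]
  simp only [h2]
  exact this

theorem det_degree {w : ℕ → V → ℝ} (mo : MonomialOrder.{0, 0} (V × Fin d))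
    (hm : ∀ a b : V × Fin d →₀ ℕ, a.degree = b.degree →
      ∀ l < d, (∀ l' < l, colwt w l' a = colwt w l' b) → colwt w l a < colwt w l b →
        mo.toSyn a < mo.toSyn b) {r : ℕ} (u : Fin r → V) (q : ℕ) (col : Fin r → Fin d)
    (hcol : ∀ j, (col j : ℕ) = q + j) (hw : ∀ l, q ≤ l → ∀ i, w l (u i) = - (i : ℝ)) :
    (Matrix.det (fun i j => (X (u i, col j) : MvPolynomial (V × Fin d) K))) ≠ 0 ∧
      mo.degree (Matrix.det (fun i j => (X (u i, col j) : MvPolynomial (V × Fin d) K))) =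
        ∑ i, Finsupp.single (u i, col i) 1 := by
  have := degree_sum_monomial mo (K := K)
    (fun s : Equiv.Perm (Fin r) => ∑ i, Finsupp.single (u (s i), col i) 1)
    (fun s => ((Equiv.Perm.sign s : ℤ) : K)) 1
    (by simp) (by
      intro s hs
      have hex : ∃ i, s i ≠ i := by
        by_contra! hcon
        exact hs (Equiv.ext hcon)
      obtain ⟨i0, hi0, hmin⟩ := (wellFounded_lt (α := Fin r)).has_min {i | s i ≠ i} hex
      have hfix : ∀ i, i < i0 → s i = i := by
        intro i hi
        by_contra h
        exact hmin i h hi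
      have hgt : i0 < s i0 := by
        rcases lt_trichotomy (s i0) i0 with h | h | h
        · exact absurd (s.injective (hfix _ h)) hi0
        · exact absurd h hi0
        · exact h
      apply hm _ _ (by simp [map_sum]) (col i0) (col i0).2
      · intro l' hl'
        rw [colwt_sum, colwt_sum]
        refine Finset.sum_congr rfl fun i _ => ?_
        simp only [colwt_single]
        split_ifs with h
        · have : i < i0 := by
            rw [Fin.lt_def]
            have := hcol i
            have := hcol i0
            omega
          rw [hfix i this]; rfl
        · rfl
      · rw [colwt_sum, colwt_sum]
        have hc : ∀ i, (col i : ℕ) = col i0 ↔ i = i0 := by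
          intro i
          rw [hcol, hcol, Fin.ext_iff]; omega
        simp only [colwt_single, hc, Finset.sum_ite_eq', Finset.mem_univ, if_true]
        rw [hw _ (by rw [hcol]; omega), hw _ (by rw [hcol]; omega)]
        have : ((i0 : ℕ) : ℝ) < ((s i0 : ℕ) : ℝ) := by exact_mod_cast hgt
        simpa using this)
  have h2 : Matrix.det (fun i j => (X (u i, col j) : MvPolynomial (V × Fin d) K)) =
      ∑ s : Equiv.Perm (Fin r), monomial (∑ i, Finsupp.single (u (s i), col i) 1)
        ((Equiv.Perm.sign s : ℤ) : K) := by
    refine (Matrix.det_apply _).trans ?_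
    refine Finset.sum_congr rfl fun s _ => ?_
    have : ∏ i, (X (u (s i), col i) : MvPolynomial (V × Fin d) K) =
      monomial (∑ i, Finsupp.single (u (s i), col i) 1) 1 := by
      rw [monomial_sum_one]; rfl
    rw [this, Units.smul_def, zsmul_eq_mul, ← map_intCast (C : K →+* MvPolynomial (V × Fin d) K),
      C_mul_monomial, mul_one]
  rw [h2]
  exact this

theorem mem_support_two {σ : Type} {a b s : σ} (h : s ∈ (Finsupp.single a 1 + Finsupp.single b 1 : σ →₀ ℕ).support) :
    s = a ∨ s = b := by
  classical
  by_contra! hc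
  rw [Finsupp.mem_support_iff, Finsupp.add_apply, Finsupp.single_eq_of_ne hc.1,
    Finsupp.single_eq_of_ne hc.2] at h
  exact h rfl

theorem mem_support_sum {σ ι : Type} [Fintype ι] {a : ι → σ} {s : σ}
    (h : s ∈ (∑ i, Finsupp.single (a i) 1 : σ →₀ ℕ).support) :
    ∃ i, s = a i := by
  classical
  obtain ⟨i, -, hi⟩ := Finset.mem_biUnion.1 (Finsupp.support_finsetSum h)
  exact ⟨i, by simpa using Finsupp.support_single_subset hi⟩

theorem regular_minors {G : SimpleGraph V} {p : ℕ} {w : ℕ → V → ℝ} {c : V → V → ℕ}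
    (hG : GoodPMD G p w c) {r : ℕ} (hr : p + r + 1 ≤ d) (u : Fin r → V)
    (hu : Function.Injective u) (col col' : Fin r → Fin d) (hcol : ∀ j, (col j : ℕ) = p + j)
    (hcol' : ∀ j, (col' j : ℕ) = p + 1 + j) :
    (∀ g, Matrix.det (fun i j => (X (u i, col j) : MvPolynomial (V × Fin d) K)) * g ∈
      lssIdeal K G d → g ∈ lssIdeal K G d) ∧
    (∀ g, Matrix.det (fun i j => (X (u i, col' j) : MvPolynomial (V × Fin d) K)) * g ∈
      Ideal.span {Matrix.det (fun i j => (X (u i, col j) : MvPolynomial (V × Fin d) K))} ⊔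
        lssIdeal K G d → g ∈ Ideal.span
          {Matrix.det (fun i j => (X (u i, col j) : MvPolynomial (V × Fin d) K))} ⊔
            lssIdeal K G d) := by
  classical
  let w' : ℕ → V → ℝ := fun l v => if l < p then w l v else
    Function.extend u (fun i => - ((i : ℕ) : ℝ)) 0 v
  obtain ⟨mo, hm⟩ := exists_order_cols (d := d) w'
  obtain ⟨hD0, hD⟩ := det_degree (K := K) mo hm u p col hcol (by
    intro l hl i
    simp only [w', if_neg (not_lt.2 hl), hu.extend_apply])
  obtain ⟨hD0', hD'⟩ := det_degree (K := K) mo hm u (p + 1) col' hcol' (by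
    intro l hl i
    have : ¬ l < p := by omega
    simp only [w', if_neg this, hu.extend_apply])
  set D := Matrix.det (fun i j => (X (u i, col j) : MvPolynomial (V × Fin d) K)) with hDdef
  set D' := Matrix.det (fun i j => (X (u i, col' j) : MvPolynomial (V × Fin d) K)) with hDdef'
  have hE : ∀ i j, ∀ h : G.Adj i j,
      (∑ k : Fin d, (X (i, k) * X (j, k) : MvPolynomial (V × Fin d) K)) ≠ 0 ∧
      mo.degree (∑ k : Fin d, (X (i, k) * X (j, k) : MvPolynomial (V × Fin d) K)) =
        Finsupp.single (i, ⟨c i j, by have := hG.lt i j h; omega⟩) 1 +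
        Finsupp.single (j, ⟨c i j, by have := hG.lt i j h; omega⟩) 1 := by
    intro i j h
    refine edge_degree mo hm i j ⟨c i j, by have := hG.lt i j h; omega⟩ ?_ ?_
    · simp only [w', if_pos (hG.lt i j h)]
      exact hG.pos i j h
    · intro k hk
      have hk : k < c i j := hk
      have : k < p := hk.trans (hG.lt i j h)
      simp only [w', if_pos this]
      exact hG.neg i j h k hk
  let E : Set (MvPolynomial (V × Fin d) K) := {f | ∃ i j : V, G.Adj i j ∧
    f = ∑ k : Fin d, MvPolynomial.X (i, k) * MvPolynomial.X (j, k)}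
  have hEfin : E.Finite := by
    refine (Set.finite_range (fun ij : V × V =>
      (∑ k : Fin d, (X (ij.1, k) * X (ij.2, k) : MvPolynomial (V × Fin d) K)))).subset ?_
    rintro f ⟨i, j, -, rfl⟩
    exact ⟨(i, j), rfl⟩
  have hL : lssIdeal K G d = Ideal.span E := rfl
  let P := hEfin.toFinset
  have hPE : (P : Set (MvPolynomial (V × Fin d) K)) = E := hEfin.coe_toFinset
  have hP : ∀ f ∈ P, ∃ i j : V, G.Adj i j ∧
    f = ∑ k : Fin d, MvPolynomial.X (i, k) * MvPolynomial.X (j, k) := by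
    intro f hf
    exact hEfin.mem_toFinset.1 hf
  have hP0 : ∀ f ∈ P, f ≠ 0 := by
    intro f hf
    obtain ⟨i, j, h, rfl⟩ := hP f hf
    exact (hE i j h).1
  have hPc : ∀ f ∈ P, ∀ g ∈ P, f ≠ g →
      Disjoint (mo.degree f).support (mo.degree g).support := by
    intro f hf g hg hne
    obtain ⟨i, j, h, rfl⟩ := hP f hf
    obtain ⟨i', j', h', rfl⟩ := hP g hg
    rw [(hE i j h).2, (hE i' j' h').2, Finset.disjoint_left]
    intro s hs hs'
    apply hne
    have h1 := mem_support_two hs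
    have h2 := mem_support_two hs'
    have hcc : c i j = c i' j' := by
      rcases h1 with rfl | rfl <;> rcases h2 with h2 | h2 <;>
        exact congrArg (fun s : V × Fin d => (s.2 : ℕ)) h2
    have hsw : ∀ a b : V, (∑ k : Fin d, (X (a, k) * X (b, k) : MvPolynomial (V × Fin d) K)) =
        ∑ k : Fin d, X (b, k) * X (a, k) := fun a b =>
      Finset.sum_congr rfl fun k _ => mul_comm _ _
    rcases h1 with rfl | rfl <;> rcases h2 with h2 | h2 <;>
      have h3 := congrArg Prod.fst h2 <;> simp only at h3
    · subst h3
      rw [hG.mat _ _ _ h h' hcc]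
    · subst h3
      rw [hG.mat _ _ _ h h'.symm (hcc.trans (hG.symm _ _ h')), hsw]
    · subst h3
      rw [hG.mat _ _ _ h.symm h' ((hG.symm _ _ h).symm.trans hcc), hsw]
    · subst h3
      rw [hG.mat _ _ _ h.symm h'.symm
        ((hG.symm _ _ h).symm.trans (hcc.trans (hG.symm _ _ h')))]
  have hPD : ∀ (q : ℕ) (co : Fin r → Fin d), p ≤ q → (∀ j, (co j : ℕ) = q + j) →
      ∀ D : MvPolynomial (V × Fin d) K, mo.degree D = ∑ i, Finsupp.single (u i, co i) 1 →
      ∀ g ∈ P, Disjoint (mo.degree g).support (mo.degree D).support := by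
    intro q co hq hco D hD g hg
    obtain ⟨i, j, h, rfl⟩ := hP g hg
    rw [(hE i j h).2, hD, Finset.disjoint_left]
    intro s hs hs'
    obtain ⟨t, rfl⟩ := mem_support_sum hs'
    have hlt := hG.lt i j h
    have h4 : (co t : ℕ) = c i j := by
      rcases mem_support_two hs with h2 | h2 <;>
        exact congrArg (fun s : V × Fin d => (s.2 : ℕ)) h2
    have := hco t
    omega
  have hPD1 := hPD p col le_rfl hcol D hD
  have hPD2 := hPD (p + 1) col' (by omega) hcol' D' hD'
  have hDD : Disjoint (mo.degree D).support (mo.degree D').support := by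
    rw [hD, hD', Finset.disjoint_left]
    intro s hs hs'
    obtain ⟨t, rfl⟩ := mem_support_sum hs
    obtain ⟨t', ht'⟩ := mem_support_sum hs'
    have h1 : t = t' := hu (congrArg Prod.fst ht')
    have h2 : (col t : ℕ) = col' t' := congrArg (fun s : V × Fin d => (s.2 : ℕ)) ht'
    rw [hcol, hcol', h1] at h2
    omega
  constructor
  · intro g hg
    rw [hL, ← hPE] at hg ⊢
    exact nzd_coprime mo P hP0 hPc D hD0 hPD1 g hg
  · intro g hg
    rw [hL, ← Ideal.span_insert, ← hPE, ← Finset.coe_insert] at hg ⊢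
    refine nzd_coprime mo (insert D P) ?_ ?_ D' hD0' ?_ g hg
    · intro f hf
      rcases Finset.mem_insert.1 hf with rfl | hf
      · exact hD0
      · exact hP0 f hf
    · intro f hf f' hf' hne
      rcases Finset.mem_insert.1 hf with rfl | hf <;>
        rcases Finset.mem_insert.1 hf' with rfl | hf'
      · exact absurd rfl hne
      · exact (hPD1 f' hf').symm
      · exact hPD1 f hf
      · exact hPc f hf f' hf' hne
    · intro f hf
      rcases Finset.mem_insert.1 hf with rfl | hf
      · exact hDD
      · exact hPD2 f hf
end lead
section pres
variable {V : Type} {K : Type} [Field K] {d : ℕ}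

theorem edge_mem {G : SimpleGraph V} {i j : V} (h : G.Adj i j) :
    (∑ k : Fin d, (X (i, k) * X (j, k) : MvPolynomial (V × Fin d) K)) ∈ lssIdeal K G d :=
  Ideal.subset_span ⟨i, j, h, rfl⟩

/-- The graph with the vertex `v` deleted. -/
abbrev delV (G : SimpleGraph V) (v : V) : SimpleGraph {x : V // x ≠ v} := G.comap Subtype.val

/-- The map from the ring of `G - v` to the ring of `G`. -/
noncomputable def delMap (K : Type) [Field K] (d : ℕ) (G : SimpleGraph V) (v : V) :
    (MvPolynomial ({x : V // x ≠ v} × Fin d) K ⧸ lssIdeal K (delV G v) d) →+*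
      (MvPolynomial (V × Fin d) K ⧸ lssIdeal K G d) :=
  Ideal.Quotient.lift _ ((Ideal.Quotient.mk (lssIdeal K G d)).comp
    (rename (fun s : {x : V // x ≠ v} × Fin d => ((s.1 : V), s.2))).toRingHom) (by
      intro a ha
      have : lssIdeal K (delV G v) d ≤ RingHom.ker ((Ideal.Quotient.mk (lssIdeal K G d)).comp
        (rename (fun s : {x : V // x ≠ v} × Fin d => ((s.1 : V), s.2))).toRingHom) := by
        refine Ideal.span_le.2 ?_
        rintro f ⟨i, j, h, rfl⟩
        rw [SetLike.mem_coe, RingHom.mem_ker, RingHom.comp_apply, Ideal.Quotient.eq_zero_iff_mem]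
        simp only [AlgHom.toRingHom_eq_coe, RingHom.coe_coe, map_sum, map_mul, rename_X]
        exact edge_mem (G := G) h
      exact this ha)

theorem delMap_mk (G : SimpleGraph V) (v : V) (a : MvPolynomial ({x : V // x ≠ v} × Fin d) K) :
    delMap K d G v (Ideal.Quotient.mk _ a) = Ideal.Quotient.mk _
      (rename (fun s : {x : V // x ≠ v} × Fin d => ((s.1 : V), s.2)) a) := rfl

theorem linPres_del (G : SimpleGraph V) (v : V) {r : ℕ} (u : Fin r → {x : V // x ≠ v})
    (hu : ∀ y : {x : V // x ≠ v}, G.Adj v y ↔ ∃ i, u i = y) :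
    LinPres (delMap K d G v)
      (fun i (t : Fin d) => Ideal.Quotient.mk (lssIdeal K (delV G v) d) (X (u i, t)))
      (fun t => Ideal.Quotient.mk (lssIdeal K G d) (X (v, t))) where
  gen := by
    classical
    intro y
    obtain ⟨q, rfl⟩ := Ideal.Quotient.mk_surjective y
    induction q using MvPolynomial.induction_on with
    | C a => exact ⟨C (Ideal.Quotient.mk _ (C a)), by rw [eval₂Hom_C, delMap_mk, rename_C]⟩
    | add p q hp hq =>
      obtain ⟨a, ha⟩ := hp
      obtain ⟨b, hb⟩ := hq
      exact ⟨a + b, by rw [map_add, ha, hb, map_add]⟩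
    | mul_X p s hp =>
      obtain ⟨a, ha⟩ := hp
      obtain ⟨y, t⟩ := s
      by_cases hy : y = v
      · subst hy
        exact ⟨a * X t, by rw [map_mul, ha, map_mul, eval₂Hom_X']⟩
      · exact ⟨a * C (Ideal.Quotient.mk _ (X (⟨y, hy⟩, t))), by
          rw [map_mul, ha, map_mul, eval₂Hom_C, delMap_mk, rename_X]⟩
  rel i := by
    simp only [delMap_mk, rename_X, ← map_mul, ← map_sum]
    rw [Ideal.Quotient.eq_zero_iff_mem]
    exact edge_mem ((hu (u i)).2 ⟨i, rfl⟩).symm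
  univ B _ ψ z hz := by
    classical
    let ev : MvPolynomial (V × Fin d) K →+* B :=
      eval₂Hom (ψ.comp ((Ideal.Quotient.mk _).comp C)) (fun s => if h : s.1 = v then z s.2 else
        ψ (Ideal.Quotient.mk (lssIdeal K (delV G v) d) (X (⟨s.1, h⟩, s.2))))
    have evC : ∀ a, ev (C a) = ψ (Ideal.Quotient.mk _ (C a)) := fun a => by simp [ev]
    have evv : ∀ t, ev (X (v, t)) = z t := fun t => by simp [ev]
    have evn : ∀ (y : {x : V // x ≠ v}) t, ev (X ((y : V), t)) =
        ψ (Ideal.Quotient.mk (lssIdeal K (delV G v) d) (X (y, t))) := fun y t => by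
      simp [ev, y.2]
    have hv : ∀ j, G.Adj v j → ∑ k, ev (X (j, k)) * ev (X (v, k)) = 0 := by
      intro j hj
      obtain ⟨i, hi⟩ := (hu ⟨j, hj.ne'⟩).1 hj
      rw [← hz i]
      refine Finset.sum_congr rfl fun t _ => ?_
      rw [evv, hi, ← evn]
    have hker : ∀ a ∈ lssIdeal K G d, ev a = 0 := by
      intro a ha
      have : lssIdeal K G d ≤ RingHom.ker ev := by
        refine Ideal.span_le.2 ?_
        rintro f ⟨i, j, h, rfl⟩
        rw [SetLike.mem_coe, RingHom.mem_ker]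
        simp only [map_sum, map_mul]
        by_cases hi : i = v
        · subst hi
          rw [← hv j h]
          exact Finset.sum_congr rfl fun t _ => mul_comm _ _
        · by_cases hj : j = v
          · subst hj
            exact hv i h.symm
          · have h1 : (∑ k : Fin d, (X ((⟨i, hi⟩ : {x : V // x ≠ v}), k) *
                X ((⟨j, hj⟩ : {x : V // x ≠ v}), k) :
                MvPolynomial ({x : V // x ≠ v} × Fin d) K)) ∈ lssIdeal K (delV G v) d :=
              edge_mem (G := delV G v) h
            rw [← Ideal.Quotient.eq_zero_iff_mem] at h1
            have h2 := congrArg ψ h1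
            simp only [map_sum, map_mul, map_zero, ← evn] at h2
            exact h2
      exact this ha
    refine ⟨Ideal.Quotient.lift _ ev hker, ?_, ?_⟩
    · intro a
      obtain ⟨q, rfl⟩ := Ideal.Quotient.mk_surjective a
      rw [delMap_mk, Ideal.Quotient.lift_mk]
      induction q using MvPolynomial.induction_on with
      | C a => rw [rename_C, evC]
      | add p q hp hq => simp only [map_add, hp, hq]
      | mul_X p s hp =>
        rw [map_mul, map_mul, hp, rename_X, evn, map_mul, map_mul]
    · intro t
      rw [Ideal.Quotient.lift_mk, evv]

end pres

theorem mk_dvd_iff {S : Type} [CommRing S] (I : Ideal S) (D h : S) :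
    Ideal.Quotient.mk I D ∣ Ideal.Quotient.mk I h ↔ h ∈ Ideal.span {D} ⊔ I := by
  constructor
  · rintro ⟨t, ht⟩
    obtain ⟨t, rfl⟩ := Ideal.Quotient.mk_surjective t
    rw [← map_mul, Ideal.Quotient.eq] at ht
    have : h = D * t + (h - D * t) := by ring
    rw [this]
    exact Ideal.add_mem _ (Ideal.mem_sup_left (Ideal.mul_mem_right _ _
      (Ideal.mem_span_singleton_self D))) (Ideal.mem_sup_right ht)
  · intro hh
    obtain ⟨a, ha, b, hb, rfl⟩ := Submodule.mem_sup.1 hh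
    obtain ⟨t, rfl⟩ := Ideal.mem_span_singleton'.1 ha
    rw [map_add, Ideal.Quotient.eq_zero_iff_mem.2 hb, add_zero, map_mul]
    exact dvd_mul_left _ _

theorem ufd_step {V : Type} [Fintype V] {K : Type} [Field K] {d : ℕ} (G : SimpleGraph V)
    {p : ℕ} {w : ℕ → V → ℝ} {c : V → V → ℕ} (hG : GoodPMD G p w c) (v : V) {r : ℕ}
    (hr : p + r + 1 ≤ d) (u : Fin r → {x : V // x ≠ v}) (hui : Function.Injective u)
    (hu : ∀ y : {x : V // x ≠ v}, G.Adj v y ↔ ∃ i, u i = y)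
    (ih : ∃ _ : IsDomain (MvPolynomial ({x : V // x ≠ v} × Fin d) K ⧸ lssIdeal K (delV G v) d),
      UniqueFactorizationMonoid
        (MvPolynomial ({x : V // x ≠ v} × Fin d) K ⧸ lssIdeal K (delV G v) d)) :
    ∃ _ : IsDomain (MvPolynomial (V × Fin d) K ⧸ lssIdeal K G d),
      UniqueFactorizationMonoid (MvPolynomial (V × Fin d) K ⧸ lssIdeal K G d) := by
  obtain ⟨_, _⟩ := ih
  let col : Fin r → Fin d := fun j => ⟨p + j, by omega⟩
  let col' : Fin r → Fin d := fun j => ⟨p + 1 + j, by omega⟩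
  have hpres := linPres_del (K := K) (d := d) G v u hu
  have hdet : ∀ co : Fin r → Fin d, delMap K d G v (Matrix.det (fun i j =>
      Ideal.Quotient.mk (lssIdeal K (delV G v) d) (X (u i, co j)))) =
      Ideal.Quotient.mk (lssIdeal K G d) (Matrix.det (fun i j =>
        (X ((u i : V), co j) : MvPolynomial (V × Fin d) K))) := by
    intro co
    refine (RingHom.map_det _ _).trans (Eq.trans ?_ (RingHom.map_det _ _).symm)
    congr 1
    refine Matrix.ext fun i j => ?_
    change delMap K d G v (Ideal.Quotient.mk _ (X (u i, co j))) =
      Ideal.Quotient.mk _ (X ((u i : V), co j))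
    rw [delMap_mk, rename_X]
  obtain ⟨h1, h2⟩ := regular_minors (K := K) hG hr (fun i => (u i : V))
    (Subtype.val_injective.comp hui) col col' (fun _ => rfl) (fun _ => rfl)
  refine hpres.ufd col col' ?_ ?_ ?_ ?_
  · intro a b hab
    have := congrArg Fin.val hab
    simp only [col] at this
    exact Fin.ext (by omega)
  · intro a b hab
    have := congrArg Fin.val hab
    simp only [col'] at this
    exact Fin.ext (by omega)
  · intro y hy
    obtain ⟨g, rfl⟩ := Ideal.Quotient.mk_surjective y
    rw [hdet, ← map_mul, Ideal.Quotient.eq_zero_iff_mem] at hy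
    rw [Ideal.Quotient.eq_zero_iff_mem]
    exact h1 g hy
  · intro y hy
    obtain ⟨g, rfl⟩ := Ideal.Quotient.mk_surjective y
    rw [hdet, hdet, ← map_mul, mk_dvd_iff] at hy
    rw [hdet, mk_dvd_iff]
    exact h2 g hy

theorem ufd_all (K : Type) [Field K] (d p k : ℕ) (hd : p + k + 1 ≤ d) (N : ℕ) :
    ∀ (V : Type) [Fintype V] (_ : Fintype.card V = N) (G : SimpleGraph V)
      (w : ℕ → V → ℝ) (c : V → V → ℕ) (_ : GoodPMD G p w c)
      (_ : ∀ s : Set V, s.Nonempty → ∃ v ∈ s, {u | u ∈ s ∧ G.Adj v u}.ncard ≤ k),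
    ∃ _ : IsDomain (MvPolynomial (V × Fin d) K ⧸ lssIdeal K G d),
      UniqueFactorizationMonoid (MvPolynomial (V × Fin d) K ⧸ lssIdeal K G d) := by
  classical
  induction N with
  | zero =>
    intro V _ hV G w c hG hk
    have hemp : IsEmpty V := Fintype.card_eq_zero_iff.1 hV
    have hbot : lssIdeal K G d = ⊥ := by
      rw [lssIdeal, Ideal.span_eq_bot]
      rintro f ⟨i, -⟩
      exact hemp.elim i
    rw [hbot]
    let e : MvPolynomial (V × Fin d) K ≃+* MvPolynomial (V × Fin d) K ⧸ (⊥ : Ideal _) :=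
      (RingEquiv.quotientBot _).symm
    have hdom : IsDomain (MvPolynomial (V × Fin d) K ⧸ (⊥ : Ideal _)) :=
      e.symm.toMulEquiv.isDomain _
    exact ⟨hdom, e.toMulEquiv.uniqueFactorizationMonoid inferInstance⟩
  | succ N ih =>
    intro V _ hV G w c hG hk
    have hne : Nonempty V := Fintype.card_pos_iff.1 (by omega)
    obtain ⟨v, -, hv⟩ := hk Set.univ Set.univ_nonempty
    let S : Set {x : V // x ≠ v} := {y | G.Adj v y}
    have hS : S.ncard ≤ k := by
      rw [← Set.ncard_image_of_injective S Subtype.val_injective]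
      refine (Set.ncard_le_ncard ?_ (Set.toFinite _)).trans hv
      rintro _ ⟨y, hy, rfl⟩
      exact ⟨Set.mem_univ _, hy⟩
    let e : Fin S.ncard ≃ S := (Finite.equivFinOfCardEq (Nat.card_coe_set_eq S)).symm
    refine ufd_step G hG v (r := S.ncard) (by omega) (fun i => (e i : {x : V // x ≠ v}))
      (Subtype.val_injective.comp e.injective) ?_ ?_
    · intro y
      constructor
      · intro hy
        exact ⟨e.symm ⟨y, hy⟩, by simp⟩
      · rintro ⟨i, rfl⟩
        exact (e i).2
    · refine ih {x : V // x ≠ v} ?_ (delV G v) (fun l y => w l y) (fun i j => c i j) ?_ ?_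
      · have := Fintype.card_subtype_compl (fun x : V => x = v)
        rw [Fintype.card_subtype_eq] at this
        have h2 : Fintype.card {x : V // x ≠ v} = Fintype.card {x : V // ¬ x = v} := rfl
        omega
      · exact ⟨fun i j h => hG.symm i j h, fun i j h => hG.lt i j h, fun i j h => hG.pos i j h,
          fun i j h => hG.neg i j h,
          fun i j j' h h' hc => Subtype.ext (hG.mat i j j' h h' hc)⟩
      · intro s hs
        obtain ⟨_, ⟨y, hy, rfl⟩, hcard⟩ := hk (Subtype.val '' s) (hs.image _)
        refine ⟨y, hy, ?_⟩
        rw [← Set.ncard_image_of_injective _ Subtype.val_injective]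
        refine (Set.ncard_le_ncard ?_ (Set.toFinite _)).trans hcard
        rintro _ ⟨z, ⟨hz, hz'⟩, rfl⟩
        exact ⟨⟨z, hz, rfl⟩, hz'⟩

theorem exists_pmd {V : Type} [Finite V] (G : SimpleGraph V) :
    {p | ∃ F : Fin p → Set (Sym2 V), IsPMDecomposition G.edgeSet F}.Nonempty := by
  classical
  let e := (Finite.equivFin G.edgeSet).symm
  refine ⟨Nat.card G.edgeSet, fun i => {(e i : Sym2 V)}, ?_, ?_, ?_⟩
  · ext x
    simp only [Set.mem_iUnion, Set.mem_singleton_iff]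
    constructor
    · rintro ⟨i, rfl⟩
      exact (e i).2
    · intro hx
      exact ⟨e.symm ⟨x, hx⟩, by rw [Equiv.apply_symm_apply]⟩
  · intro i j hij
    simp only [Set.disjoint_singleton]
    intro h
    exact hij (e.injective (Subtype.ext h))
  · intro i
    refine ⟨?_, ?_, ?_⟩
    · rintro _ rfl
      refine ⟨(e i).2, ?_⟩
      simp only [Set.mem_iUnion, Set.mem_singleton_iff, not_exists]
      intro j hj h
      rw [e.injective (Subtype.ext h)] at hj
      exact lt_irrefl _ hj
    · exact Set.pairwise_singleton _ _
    · refine ⟨fun v => if v ∈ (e i : Sym2 V) then 1 else -2, ?_, ?_⟩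
      · rintro _ rfl
        induction h : (e i : Sym2 V) using Sym2.ind with
        | _ a b =>
          simp [edgeWeight]
      · rintro x ⟨⟨hx, -⟩, hxi⟩
        rw [Set.mem_singleton_iff] at hxi
        induction x using Sym2.ind with
        | _ a b =>
          have hab : a ≠ b := G.ne_of_adj hx
          simp only [edgeWeight, Sym2.lift_mk]
          by_cases ha : a ∈ (e i : Sym2 V)
          · by_cases hb : b ∈ (e i : Sym2 V)
            · exact absurd ((Sym2.mem_and_mem_iff hab).1 ⟨ha, hb⟩).symm hxi
            · rw [if_pos ha, if_neg hb]; norm_num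
          · rw [if_neg ha]
            split_ifs <;> norm_num

theorem exists_good {V : Type} [Finite V] (G : SimpleGraph V) :
    ∃ w c, GoodPMD G (pmd G) w c := by
  classical
  obtain ⟨F, h1, h2, h3⟩ := Nat.sInf_mem (exists_pmd G)
  change Fin (pmd G) → _ at F
  have hlab : ∀ e : Sym2 V, ∃ l : ℕ, e ∈ G.edgeSet → ∃ h : l < pmd G, e ∈ F ⟨l, h⟩ := by
    intro e
    by_cases he : e ∈ G.edgeSet
    · rw [← h1] at he
      obtain ⟨l, hl⟩ := Set.mem_iUnion.1 he
      exact ⟨l, fun _ => ⟨l.2, hl⟩⟩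
    · exact ⟨0, fun h => absurd h he⟩
  choose lab hlab using hlab
  have hw : ∀ l : ℕ, ∃ w : V → ℝ, ∀ h : l < pmd G, (∀ e ∈ F ⟨l, h⟩, 0 < edgeWeight w e) ∧
      ∀ e ∈ (G.edgeSet \ ⋃ j : Fin (pmd G), ⋃ _ : j < ⟨l, h⟩, F j) \ F ⟨l, h⟩,
        edgeWeight w e < 0 := by
    intro l
    by_cases hl : l < pmd G
    · obtain ⟨-, -, w, hw⟩ := h3 ⟨l, hl⟩
      exact ⟨w, fun _ => hw⟩
    · exact ⟨0, fun h => absurd h hl⟩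
  choose w hw using hw
  have huniq : ∀ (i j : Fin (pmd G)) e, e ∈ F i → e ∈ F j → i = j := by
    intro i j e hi hj
    by_contra hne
    exact Set.disjoint_left.1 (h2 hne) hi hj
  refine ⟨w, fun i j => lab s(i, j), ?_, ?_, ?_, ?_, ?_⟩
  · intro i j _
    rw [Sym2.eq_swap]
  · intro i j h
    exact (hlab s(i, j) h).1
  · intro i j h
    obtain ⟨hl, hm⟩ := hlab s(i, j) h
    exact (hw _ hl).1 _ hm
  · intro i j h l hlt
    obtain ⟨hl, hm⟩ := hlab s(i, j) h
    refine (hw l (hlt.trans hl)).2 s(i, j) ⟨⟨h, ?_⟩, ?_⟩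
    · simp only [Set.mem_iUnion, not_exists]
      intro j' hj' hm'
      have := huniq _ _ _ hm hm'
      rw [← this, Fin.lt_def] at hj'
      exact absurd hj' (by simp only; omega)
    · intro hm'
      have := congrArg Fin.val (huniq _ _ _ hm hm')
      simp only at this
      omega
  · intro i j j' h h' hl
    obtain ⟨hl1, hm1⟩ := hlab s(i, j) h
    obtain ⟨hl2, hm2⟩ := hlab s(i, j') h'
    have hm2' : s(i, j') ∈ F ⟨lab s(i, j), hl1⟩ := by
      have : (⟨lab s(i, j), hl1⟩ : Fin (pmd G)) = ⟨lab s(i, j'), hl2⟩ := Fin.ext hl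
      rw [this]; exact hm2
    by_contra hne
    have hne' : s(i, j) ≠ s(i, j') := by
      intro h
      exact hne (Sym2.congr_right.1 h)
    exact (h3 _).2.1 hm1 hm2' hne' i ⟨Sym2.mem_mk_left _ _, Sym2.mem_mk_left _ _⟩

theorem degeneracy_spec {V : Type} [Finite V] (G : SimpleGraph V) :
    ∀ s : Set V, s.Nonempty → ∃ v ∈ s, {u | u ∈ s ∧ G.Adj v u}.ncard ≤ degeneracy G := by
  have hne : {k | ∀ s : Set V, s.Nonempty →
      ∃ v ∈ s, {u | u ∈ s ∧ G.Adj v u}.ncard ≤ k}.Nonempty := by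
    refine ⟨(Set.univ : Set V).ncard, ?_⟩
    rintro s ⟨v, hv⟩
    exact ⟨v, hv, Set.ncard_le_ncard (Set.subset_univ _) (Set.toFinite _)⟩
  exact Nat.sInf_mem hne

/-- If `d ≥ pmd(G) + k(G) + 1` then the LSS ring `R_G(d)` is a unique factorization
domain. -/
theorem lss_ring_isUFD (K : Type) [Field K] (n d : ℕ) (G : SimpleGraph (Fin n))
    (hd : pmd G + degeneracy G + 1 ≤ d) :
    ∃ _ : IsDomain (MvPolynomial (Fin n × Fin d) K ⧸ lssIdeal K G d),
      UniqueFactorizationMonoid (MvPolynomial (Fin n × Fin d) K ⧸ lssIdeal K G d) := by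
  obtain ⟨w, c, hG⟩ := exists_good G
  exact ufd_all K d (pmd G) (degeneracy G) hd n (Fin n) (Fintype.card_fin n) G w c hG
    (degeneracy_spec G)
end

section
/- Let G = (V, E) be a forest and let d ≥ Δ(G) + 1, where Δ(G) is the maximal vertex degree of G. Then the Lovász–Saks–Schrijver ring R_G(d) is a normal domain, i.e., an integral domain that is integrally closed in its field of fractions. -/
open MvPolynomial

namespace LSSAux

section core
variable {A : Type} [CommRing A]

lemma key_coeff {a b : A} (ha : ∀ g, a * g = 0 → g = 0) (q : Polynomial A) (N : ℕ)
    (hN : (q * (Polynomial.C a * Polynomial.X + Polynomial.C b)).natDegree ≤ N) :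
    (N = 0 → q = 0) ∧
    (1 ≤ N → a ∣ (q * (Polynomial.C a * Polynomial.X + Polynomial.C b)).coeff N) := by
  have hc : ∀ m, (q * (Polynomial.C a * Polynomial.X + Polynomial.C b)).coeff (m + 1)
      = a * q.coeff m + b * q.coeff (m + 1) := by
    intro m
    rw [mul_add, Polynomial.coeff_add, ← mul_assoc, Polynomial.coeff_mul_X,
      Polynomial.coeff_mul_C, Polynomial.coeff_mul_C]
    ring
  by_cases hq : q = 0
  · subst hq; simp
  have hlt : q.natDegree + 1 ≤ N := by
    by_contra hcon
    have h1 := Polynomial.coeff_eq_zero_of_natDegree_lt (lt_of_le_of_lt hN (not_le.mp hcon))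
    rw [hc, Polynomial.coeff_eq_zero_of_natDegree_lt (Nat.lt_succ_self _), mul_zero, add_zero] at h1
    exact hq (Polynomial.leadingCoeff_eq_zero.mp (ha _ h1))
  refine ⟨by omega, fun h => ?_⟩
  obtain ⟨m, rfl⟩ : ∃ m, N = m + 1 := ⟨N - 1, by omega⟩
  rw [hc, Polynomial.coeff_eq_zero_of_natDegree_lt (n := m + 1) (by omega), mul_zero, add_zero]
  exact dvd_mul_right _ _

lemma reduce_step {a b : A} (g : Polynomial A) (h : 1 ≤ g.natDegree) (hd : a ∣ g.leadingCoeff) :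
    ∃ t, (g - t * (Polynomial.C a * Polynomial.X + Polynomial.C b)).natDegree < g.natDegree := by
  obtain ⟨t, ht⟩ := hd
  obtain ⟨m, hm⟩ : ∃ m, g.natDegree = m + 1 := ⟨g.natDegree - 1, by omega⟩
  refine ⟨Polynomial.C t * Polynomial.X ^ m, ?_⟩
  have e : Polynomial.C t * Polynomial.X ^ m * (Polynomial.C a * Polynomial.X + Polynomial.C b)
      = Polynomial.C (a * t) * Polynomial.X ^ (m + 1) + Polynomial.C (t * b) * Polynomial.X ^ m := by
    simp only [map_mul]; ring
  rw [e]
  have hle : (g - (Polynomial.C (a * t) * Polynomial.X ^ (m + 1)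
      + Polynomial.C (t * b) * Polynomial.X ^ m)).natDegree ≤ m := by
    rw [Polynomial.natDegree_le_iff_coeff_eq_zero]
    intro N hN
    simp only [Polynomial.coeff_sub, Polynomial.coeff_add, Polynomial.coeff_C_mul_X_pow]
    rcases eq_or_ne N (m + 1) with rfl | hne
    · rw [← ht, Polynomial.leadingCoeff, hm]; simp
    · rw [Polynomial.coeff_eq_zero_of_natDegree_lt (by omega)]
      simp [hne, show N ≠ m by omega]
  omega

lemma core_radical {a b : A} (ha : ∀ g, a * g = 0 → g = 0) (hred : ∀ g : A, g ^ 2 = 0 → g = 0)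
    (hra : ∀ g : A, a ∣ g ^ 2 → a ∣ g) (g : Polynomial A)
    (hg : Polynomial.C a * Polynomial.X + Polynomial.C b ∣ g ^ 2) :
    Polynomial.C a * Polynomial.X + Polynomial.C b ∣ g := by
  induction hN : g.natDegree using Nat.strong_induction_on generalizing g with
  | _ N ih =>
  obtain ⟨q, hq⟩ := hg
  have hdeg : (g ^ 2).natDegree ≤ 2 * N := hN ▸ Polynomial.natDegree_pow_le
  have hcoe : (g ^ 2).coeff (2 * N) = g.leadingCoeff ^ 2 := by
    rw [← hN, mul_comm, sq, sq, mul_two, Polynomial.coeff_mul_degree_add_degree]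
  have key := key_coeff ha q (2 * N) (b := b) (by rw [mul_comm, ← hq]; exact hdeg)
  rw [mul_comm q, ← hq, hcoe] at key
  rcases Nat.eq_zero_or_pos N with h0 | hpos
  · have hq0 := key.1 (by omega)
    rw [hq0, mul_zero] at hq
    rw [hq, h0] at hcoe
    have : g = 0 := Polynomial.leadingCoeff_eq_zero.mp (hred _ (by simpa using hcoe.symm))
    simp [this]
  · obtain ⟨t, ht⟩ := reduce_step (b := b) g (by omega) (hra _ (key.2 (by omega)))
    have := ih _ (hN ▸ ht) (g - t * (Polynomial.C a * Polynomial.X + Polynomial.C b)) ?_ rfl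
    · exact (dvd_sub_left (Dvd.intro_left _ rfl)).mp this
    · rw [sub_sq, hq]
      exact ⟨q - 2 * g * t + t ^ 2 * (Polynomial.C a * Polynomial.X + Polynomial.C b), by ring⟩

lemma core_nzd {a b x : A} (ha : ∀ g, a * g = 0 → g = 0) (hx : ∀ g : A, x * g = 0 → g = 0)
    (hxa : ∀ g : A, a ∣ x * g → a ∣ g) (g : Polynomial A)
    (hg : Polynomial.C a * Polynomial.X + Polynomial.C b ∣ Polynomial.C x * g) :
    Polynomial.C a * Polynomial.X + Polynomial.C b ∣ g := by
  induction hN : g.natDegree using Nat.strong_induction_on generalizing g with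
  | _ N ih =>
  obtain ⟨q, hq⟩ := hg
  have hdeg : (Polynomial.C x * g).natDegree ≤ N := hN ▸ Polynomial.natDegree_C_mul_le _ _
  have hcoe : (Polynomial.C x * g).coeff N = x * g.leadingCoeff := by
    rw [Polynomial.coeff_C_mul, ← hN]; rfl
  have key := key_coeff ha q N (b := b) (by rw [mul_comm, ← hq]; exact hdeg)
  rw [mul_comm q, ← hq, hcoe] at key
  rcases Nat.eq_zero_or_pos N with h0 | hpos
  · have hq0 := key.1 (by omega)
    rw [hq0, mul_zero] at hq
    rw [hq] at hcoe
    have : g = 0 := Polynomial.leadingCoeff_eq_zero.mp (hx _ (by simpa using hcoe.symm))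
    simp [this]
  · obtain ⟨t, ht⟩ := reduce_step (b := b) g (by omega) (hxa _ (key.2 (by omega)))
    have := ih _ (hN ▸ ht) (g - t * (Polynomial.C a * Polynomial.X + Polynomial.C b)) ?_ rfl
    · exact (dvd_sub_left (Dvd.intro_left _ rfl)).mp this
    · rw [mul_sub, hq]
      exact ⟨q - Polynomial.C x * t, by ring⟩

/-- Membership in `ker π + (f)`. -/
lemma mem_ker_sup {S B : Type} [CommRing S] [CommRing B] {π : S →+* B}
    (hπ : Function.Surjective π) (f g : S) :
    g ∈ RingHom.ker π ⊔ Ideal.span {f} ↔ π f ∣ π g := by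
  constructor
  · intro h
    obtain ⟨i, hi, j, hj, rfl⟩ := Submodule.mem_sup.mp h
    obtain ⟨c, rfl⟩ := Ideal.mem_span_singleton.mp hj
    rw [map_add, (RingHom.mem_ker).mp hi, zero_add, map_mul]
    exact dvd_mul_right _ _
  · rintro ⟨c, hc⟩
    obtain ⟨c, rfl⟩ := hπ c
    refine Submodule.mem_sup.mpr ⟨g - f * c, ?_, f * c, Ideal.mem_span_singleton.mpr
      (dvd_mul_right _ _), by ring⟩
    rw [RingHom.mem_ker, map_sub, map_mul, hc, sub_self]

variable {S : Type} [CommRing S]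

lemma S_radical {π : S →+* Polynomial A} (hπ : Function.Surjective π) {α f : S} {a b : A}
    (hα : π α = Polynomial.C a) (hf : π f = Polynomial.C a * Polynomial.X + Polynomial.C b)
    (h1 : ∀ g, α * g ∈ RingHom.ker π → g ∈ RingHom.ker π)
    (h2 : (RingHom.ker π).IsRadical)
    (h3 : (RingHom.ker π ⊔ Ideal.span {α}).IsRadical) :
    (RingHom.ker π ⊔ Ideal.span {f}).IsRadical := by
  rw [Ideal.isRadical_iff_pow_one_lt 2 (by norm_num)]
  intro r hr
  rw [mem_ker_sup hπ, hf] at hr ⊢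
  rw [map_pow] at hr
  refine core_radical ?_ ?_ ?_ _ hr
  · intro g hg
    obtain ⟨g', hg'⟩ := hπ (Polynomial.C g)
    have := h1 g' (by rw [RingHom.mem_ker, map_mul, hα, hg', ← map_mul, hg, map_zero])
    rw [RingHom.mem_ker, hg'] at this
    simpa using this
  · intro g hg
    obtain ⟨g', hg'⟩ := hπ (Polynomial.C g)
    have := h2 (⟨2, by rw [RingHom.mem_ker, map_pow, hg', ← map_pow, hg, map_zero]⟩ :
      g' ∈ (RingHom.ker π).radical)
    rw [RingHom.mem_ker, hg'] at this
    simpa using this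
  · intro g hg
    obtain ⟨g', hg'⟩ := hπ (Polynomial.C g)
    have := h3 (⟨2, by rw [mem_ker_sup hπ, map_pow, hg', ← map_pow, hα]; exact map_dvd _ hg⟩ :
      g' ∈ (RingHom.ker π ⊔ Ideal.span {α}).radical)
    rw [mem_ker_sup hπ, hg', hα, Polynomial.C_dvd_iff_dvd_coeff] at this
    simpa using this 0

lemma S_nzd {π : S →+* Polynomial A} (hπ : Function.Surjective π) {α f ξ : S} {a b x : A}
    (hα : π α = Polynomial.C a) (hf : π f = Polynomial.C a * Polynomial.X + Polynomial.C b)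
    (hξ : π ξ = Polynomial.C x)
    (h1 : ∀ g, α * g ∈ RingHom.ker π → g ∈ RingHom.ker π)
    (h2 : ∀ g, ξ * g ∈ RingHom.ker π → g ∈ RingHom.ker π)
    (h3 : ∀ g, ξ * g ∈ RingHom.ker π ⊔ Ideal.span {α} → g ∈ RingHom.ker π ⊔ Ideal.span {α})
    (r : S) (hr : ξ * r ∈ RingHom.ker π ⊔ Ideal.span {f}) :
    r ∈ RingHom.ker π ⊔ Ideal.span {f} := by
  rw [mem_ker_sup hπ, hf] at hr ⊢
  rw [map_mul, hξ] at hr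
  refine core_nzd ?_ ?_ ?_ _ hr
  · intro g hg
    obtain ⟨g', hg'⟩ := hπ (Polynomial.C g)
    have := h1 g' (by rw [RingHom.mem_ker, map_mul, hα, hg', ← map_mul, hg, map_zero])
    rw [RingHom.mem_ker, hg'] at this
    simpa using this
  · intro g hg
    obtain ⟨g', hg'⟩ := hπ (Polynomial.C g)
    have := h2 g' (by rw [RingHom.mem_ker, map_mul, hξ, hg', ← map_mul, hg, map_zero])
    rw [RingHom.mem_ker, hg'] at this
    simpa using this
  · intro g hg
    obtain ⟨g', hg'⟩ := hπ (Polynomial.C g)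
    have := h3 g' (by rw [mem_ker_sup hπ, map_mul, hg', hξ, ← map_mul, hα]; exact map_dvd _ hg)
    rw [mem_ker_sup hπ, hg', hα, Polynomial.C_dvd_iff_dvd_coeff] at this
    simpa using this 0
end core

/-- Splitting off one variable `z` from a polynomial ring modulo an ideal not involving `z`. -/
lemma exists_split {K σ : Type} [Field K] (z : σ) (W : Set (MvPolynomial σ K))
    (hW : ∀ w ∈ W, w ∈ supported K {s | s ≠ z}) :
    ∃ (A : Type) (_ : CommRing A) (π : MvPolynomial σ K →+* Polynomial A),
      Function.Surjective π ∧ RingHom.ker π = Ideal.span W ∧ π (X z) = Polynomial.X ∧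
      ∀ p ∈ supported K {s | s ≠ z}, ∃ a, π p = Polynomial.C a := by
  classical
  let A0 := MvPolynomial {s // s ≠ z} K
  let ι : A0 →+* MvPolynomial σ K := (rename (Subtype.val : {s // s ≠ z} → σ)).toRingHom
  let e : MvPolynomial σ K ≃+* Polynomial A0 :=
    ((renameEquiv K (Equiv.optionSubtypeNe z).symm).trans
      (optionEquivLeft K {s // s ≠ z})).toRingEquiv
  have heX : e (X z) = Polynomial.X := by
    simp [e, optionEquivLeft_X_none]
  have heι : ∀ p, e (ι p) = Polynomial.C p := by
    intro p
    have : (e : MvPolynomial σ K →+* Polynomial A0).comp ι = Polynomial.C := by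
      apply MvPolynomial.ringHom_ext
      · intro r
        simp [e, ι]
        exact optionEquivLeft_C K {s // s ≠ z} r
      · intro i
        simp [e, ι, Equiv.optionSubtypeNe_symm_apply, i.2]
        exact optionEquivLeft_X_some K {s // s ≠ z} i
    exact RingHom.congr_fun this p
  have hsup : ∀ p ∈ supported K {s | s ≠ z}, ∃ q, ι q = p := by
    intro p hp
    rw [supported_eq_range_rename] at hp
    exact hp
  let I0 := (Ideal.span W).comap ι
  let π : MvPolynomial σ K →+* Polynomial (A0 ⧸ I0) :=
    (Polynomial.mapRingHom (Ideal.Quotient.mk I0)).comp e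
  refine ⟨A0 ⧸ I0, inferInstance, π, ?_, ?_, ?_, ?_⟩
  · exact (Polynomial.map_surjective _ Ideal.Quotient.mk_surjective).comp e.surjective
  · apply le_antisymm
    · intro g hg
      have hg : (e g).map (Ideal.Quotient.mk I0) = 0 := hg
      have hco : ∀ n, ι ((e g).coeff n) ∈ Ideal.span W := by
        intro n
        have := congrArg (fun p => Polynomial.coeff p n) hg
        simp only [Polynomial.coeff_map, Polynomial.coeff_zero] at this
        exact Ideal.mem_comap.mp (Ideal.Quotient.eq_zero_iff_mem.mp this)
      have : g = ∑ n ∈ (e g).support, ι ((e g).coeff n) * X z ^ n := by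
        apply e.injective
        rw [map_sum]
        simp only [map_mul, map_pow, heι, heX]
        exact (e g).as_sum_support_C_mul_X_pow
      rw [this]
      exact Ideal.sum_mem _ fun n _ => Ideal.mul_mem_right _ _ (hco n)
    · rw [Ideal.span_le]
      intro w hw
      obtain ⟨q, hq⟩ := hsup w (hW w hw)
      have hq0 : q ∈ I0 := by
        refine Ideal.mem_comap.mpr ?_
        rw [hq]; exact Ideal.subset_span hw
      change (e w).map (Ideal.Quotient.mk I0) = 0
      rw [← hq, heι, Polynomial.map_C, Ideal.Quotient.eq_zero_iff_mem.mpr hq0, map_zero]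
  · change (e (X z)).map _ = _
    rw [heX, Polynomial.map_X]
  · intro p hp
    obtain ⟨q, rfl⟩ := hsup p hp
    refine ⟨Ideal.Quotient.mk I0 q, ?_⟩
    change (e (ι q)).map _ = _
    rw [heι, Polynomial.map_C]

lemma isIntegrallyClosed_of_polynomial {A : Type} [CommRing A] [IsDomain A]
    [IsIntegrallyClosed (Polynomial A)] : IsIntegrallyClosed A := by
  rw [isIntegrallyClosed_iff (FractionRing A)]
  intro k hk
  obtain ⟨p, q, hq, rfl⟩ := IsFractionRing.div_surjective (A := A) k
  have hq0 : q ≠ 0 := nonZeroDivisors.ne_zero hq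
  let L := FractionRing (Polynomial A)
  have hinj : Function.Injective (algebraMap A L) := by
    rw [IsScalarTower.algebraMap_eq A (Polynomial A) L]
    exact (IsFractionRing.injective (Polynomial A) L).comp Polynomial.C_injective
  let j : FractionRing A →ₐ[A] L := IsFractionRing.liftAlgHom (g := Algebra.ofId A L) hinj
  have h1 : IsIntegral A (j (algebraMap _ _ p / algebraMap _ _ q)) := hk.map j
  have h2 : IsIntegral (Polynomial A) (j (algebraMap _ _ p / algebraMap _ _ q)) := h1.tower_top
  obtain ⟨h, hh⟩ := (isIntegrallyClosed_iff L).mp ‹_› h2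
  rw [map_div₀, AlgHom.commutes, AlgHom.commutes] at hh
  have hqL : algebraMap A L q ≠ 0 := by
    rw [Ne, map_eq_zero_iff _ hinj]; exact hq0
  rw [eq_div_iff hqL, IsScalarTower.algebraMap_apply A (Polynomial A) L,
    IsScalarTower.algebraMap_apply A (Polynomial A) L, ← map_mul] at hh
  have h3 := IsFractionRing.injective (Polynomial A) L hh
  have h4 : h.coeff 0 * q = p := by
    have := congrArg (fun r => Polynomial.coeff r 0) h3
    simpa using this
  refine ⟨h.coeff 0, ?_⟩
  rw [eq_div_iff (by simpa using hq0), ← map_mul, h4]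

lemma clear_X {A : Type} [CommRing A] (a b : A) (p : Polynomial A) :
    ∃ (n : ℕ) (a0 : A), Polynomial.C a * Polynomial.X + Polynomial.C b ∣
      Polynomial.C a ^ n * p - Polynomial.C a0 := by
  induction p using Polynomial.induction_on' with
  | add p q hp hq =>
    obtain ⟨n, a0, hp⟩ := hp
    obtain ⟨m, a1, hq⟩ := hq
    refine ⟨n + m, a ^ m * a0 + a ^ n * a1, ?_⟩
    have := dvd_add (hp.mul_left (Polynomial.C a ^ m)) (hq.mul_left (Polynomial.C a ^ n))
    convert this using 1
    simp only [map_add, map_mul, map_pow]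
    ring
  | monomial n c =>
    refine ⟨n, c * (-b) ^ n, ?_⟩
    have := sub_dvd_pow_sub_pow (Polynomial.C a * Polynomial.X) (Polynomial.C (-b)) n
    rw [map_neg, sub_neg_eq_add] at this
    convert this.mul_left (Polynomial.C c) using 1
    rw [← Polynomial.C_mul_X_pow_eq_monomial]
    simp only [map_neg, map_mul, map_pow]
    ring

lemma normal_step {S A : Type} [CommRing S] [CommRing A] [IsDomain A] [IsIntegrallyClosed A]
    {π : S →+* Polynomial A} (hπ : Function.Surjective π) {ξ f : S} {a b : A} (ha : a ≠ 0)
    (hξ : π ξ = Polynomial.C a) (hf : π f = Polynomial.C a * Polynomial.X + Polynomial.C b)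
    (J : Ideal S) (hJ : J = RingHom.ker π ⊔ Ideal.span {f})
    (hnzd : ∀ r, ξ * r ∈ J → r ∈ J) (hrad : (J ⊔ Ideal.span {ξ}).IsRadical) :
    ∃ _ : IsDomain (S ⧸ J), IsIntegrallyClosed (S ⧸ J) := by
  let B := Localization.Away a
  have hM : Submonoid.powers a ≤ nonZeroDivisors A := powers_le_nonZeroDivisors_of_noZeroDivisors ha
  have : IsDomain B := IsLocalization.isDomain_localization hM
  have : IsIntegrallyClosed B := isIntegrallyClosed_of_isLocalization B (Submonoid.powers a) hM
  have hAB : Function.Injective (algebraMap A B) := IsLocalization.injective B hM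
  let c : B := -(algebraMap A B b) * IsLocalization.Away.invSelf a
  have hac : algebraMap A B a * c + algebraMap A B b = 0 := by
    have := IsLocalization.Away.mul_invSelf (S := B) a
    simp only [c]
    linear_combination (-(algebraMap A B b)) * this
  let Φ : S →+* B := (Polynomial.eval₂RingHom (algebraMap A B) c).comp π
  have hΦξ : Φ ξ = algebraMap A B a := by simp [Φ, hξ]
  have hpow : ∀ n r, ξ ^ n * r ∈ J → r ∈ J := by
    intro n
    induction n with
    | zero => intro r h; simpa using h
    | succ n ih => intro r h; exact ih r (hnzd _ (by rwa [← mul_assoc, ← pow_succ']))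
  have hJle : ∀ g ∈ J, Φ g = 0 := by
    intro g hg
    rw [hJ, mem_ker_sup hπ, hf] at hg
    obtain ⟨q, hq⟩ := hg
    simp only [Φ, RingHom.comp_apply, hq, map_mul]
    simp [hac]
  have hker : ∀ g, Φ g = 0 → g ∈ J := by
    intro g hg
    obtain ⟨n, a0, q, hq⟩ := clear_X a b (π g)
    have h0 : a0 = 0 := by
      have h := congrArg (Polynomial.eval₂RingHom (algebraMap A B) c) hq
      have hg' : Polynomial.eval₂ (algebraMap A B) c (π g) = 0 := hg
      simp [hac, hg'] at h
      exact h
    apply hpow n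
    rw [hJ, mem_ker_sup hπ, hf, map_mul, map_pow, hξ]
    exact ⟨q, by rw [← hq, h0, map_zero, sub_zero]⟩
  let θ : S ⧸ J →+* B := Ideal.Quotient.lift J Φ hJle
  have hθ : ∀ g, θ (Ideal.Quotient.mk J g) = Φ g := fun g => Ideal.Quotient.lift_mk _ _ _
  have hθinj : Function.Injective θ := by
    rw [injective_iff_map_eq_zero]
    intro x hx
    obtain ⟨g, rfl⟩ := Ideal.Quotient.mk_surjective x
    exact Ideal.Quotient.eq_zero_iff_mem.mpr (hker g (by rwa [← hθ]))
  have hdom : IsDomain (S ⧸ J) := hθinj.isDomain θ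
  refine ⟨hdom, ?_⟩
  let _ : Algebra (S ⧸ J) B := θ.toAlgebra
  let F := FractionRing B
  have hBF : Function.Injective (algebraMap B F) := IsFractionRing.injective B F
  have htow : ∀ x : S ⧸ J, algebraMap (S ⧸ J) F x = algebraMap B F (θ x) := fun x => rfl
  have hRF : Function.Injective (algebraMap (S ⧸ J) F) := hBF.comp hθinj
  have hlift : ∀ p : A, ∃ r : S ⧸ J, θ r = algebraMap A B p := by
    intro p
    obtain ⟨g, hg⟩ := hπ (Polynomial.C p)
    exact ⟨Ideal.Quotient.mk J g, by rw [hθ]; simp [Φ, hg]⟩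
  have hden : ∀ β : B, ∃ (n : ℕ) (r : S ⧸ J), θ (Ideal.Quotient.mk J ξ) ^ n * β = θ r := by
    intro β
    obtain ⟨⟨p, ⟨_, n, rfl⟩⟩, hp⟩ := IsLocalization.surj (Submonoid.powers a) β
    obtain ⟨r, hr⟩ := hlift p
    refine ⟨n, r, ?_⟩
    rw [hr, ← hp, hθ, hΦξ, mul_comm]
    simp
  have hξ0 : θ (Ideal.Quotient.mk J ξ) ≠ 0 := by
    rw [hθ, hΦξ, Ne, map_eq_zero_iff _ hAB]; exact ha
  set x := Ideal.Quotient.mk J ξ with hx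
  have : FaithfulSMul (S ⧸ J) F := (faithfulSMul_iff_algebraMap_injective _ _).mpr hRF
  have : IsFractionRing (S ⧸ J) F := by
    apply IsFractionRing.of_field
    intro z
    obtain ⟨p, q, hq, rfl⟩ := IsFractionRing.div_surjective (A := B) z
    have hq0 : q ≠ 0 := nonZeroDivisors.ne_zero hq
    obtain ⟨n, r, hr⟩ := hden p
    obtain ⟨m, s, hs⟩ := hden q
    refine ⟨x ^ m * r, x ^ n * s, ?_⟩
    rw [htow, htow, map_mul θ, map_mul θ, ← hr, ← hs, map_pow θ, map_pow θ]
    have hx' : algebraMap B F (θ x) ≠ 0 := by rwa [Ne, map_eq_zero_iff _ hBF]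
    have hq' : algebraMap B F q ≠ 0 := by rwa [Ne, map_eq_zero_iff _ hBF]
    simp only [map_mul, map_pow]
    rw [div_eq_div_iff hq' (mul_ne_zero (pow_ne_zero _ hx') (mul_ne_zero (pow_ne_zero _ hx') hq'))]
    ring
  rw [isIntegrallyClosed_iff F]
  intro g hg
  have key : ∀ (n : ℕ) (r : S ⧸ J) (g : F), IsIntegral (S ⧸ J) g →
      algebraMap (S ⧸ J) F x ^ n * g = algebraMap (S ⧸ J) F r →
      ∃ y, algebraMap (S ⧸ J) F y = g := by
    intro n
    induction n with
    | zero => intro r g _ h; exact ⟨r, by rw [← h]; simp⟩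
    | succ n ih =>
      intro r g hg h
      have h_integral : IsIntegral (S ⧸ J) (algebraMap (S ⧸ J) F x ^ n * g) :=
        (isIntegral_algebraMap.pow n).mul hg
      obtain ⟨P, hPm, hP⟩ := h_integral
      have hr : x ∣ r := by
        -- `r / x` is integral, so a power of `r` is divisible by `x`
        have hroot : (P.scaleRoots x).eval r = 0 := by
          apply hRF
          rw [map_zero, ← Polynomial.eval₂_at_apply]
          have := Polynomial.scaleRoots_eval₂_mul (p := P) (algebraMap (S ⧸ J) F)
            (algebraMap (S ⧸ J) F x ^ n * g) x
          rw [hP, mul_zero, ← mul_assoc, ← pow_succ', h] at this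
          exact this
        have hdvd : x ∣ r ^ P.natDegree := by
          have hm := (Polynomial.monic_scaleRoots_iff (p := P) x).mpr hPm
          rw [Polynomial.eval_eq_sum_range, Finset.sum_range_succ,
            hm.coeff_natDegree, one_mul, Polynomial.natDegree_scaleRoots] at hroot
          rw [eq_neg_of_add_eq_zero_right hroot]
          refine (Finset.dvd_sum fun i hi => ?_).neg_right
          rw [Polynomial.coeff_scaleRoots]
          have : P.natDegree - i ≠ 0 := by
            have := Finset.mem_range.mp hi; omega
          exact ((dvd_pow_self x this).mul_left _).mul_right _
        obtain ⟨r', rfl⟩ := Ideal.Quotient.mk_surjective r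
        obtain ⟨w, hw⟩ := hdvd
        obtain ⟨w, rfl⟩ := Ideal.Quotient.mk_surjective w
        rw [hx, ← map_pow, ← map_mul, Ideal.Quotient.eq] at hw
        have hmem : r' ∈ J ⊔ Ideal.span {ξ} := hrad ⟨P.natDegree, Submodule.mem_sup.mpr
          ⟨_, hw, ξ * w, Ideal.mem_span_singleton.mpr (dvd_mul_right _ _), by ring⟩⟩
        obtain ⟨i, hi, j, hj, rfl⟩ := Submodule.mem_sup.mp hmem
        obtain ⟨w', rfl⟩ := Ideal.mem_span_singleton.mp hj
        rw [map_add, Ideal.Quotient.eq_zero_iff_mem.mpr hi, zero_add, map_mul]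
        exact dvd_mul_right _ _
      obtain ⟨s, rfl⟩ := hr
      apply ih s g hg
      have hx' : algebraMap (S ⧸ J) F x ≠ 0 := by
        rw [htow, Ne, map_eq_zero_iff _ hBF]; exact hξ0
      apply mul_left_cancel₀ hx'
      rw [← mul_assoc, ← pow_succ', h, map_mul]
  have hgB : IsIntegral B g := hg.tower_top
  obtain ⟨β, rfl⟩ := (isIntegrallyClosed_iff F).mp ‹IsIntegrallyClosed B› hgB
  obtain ⟨n, r, hr⟩ := hden β
  refine key n r _ hg ?_
  rw [htow, htow, ← hr, map_mul, map_pow]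

section graph

variable {V : Type} {d : ℕ}

/-- Building a forest edge by edge, always attaching an isolated vertex `v` to a vertex `u` with a
colour `c`; the set records the pairs (vertex, colour) that have been used. -/
inductive Build (V : Type) (d : ℕ) : SimpleGraph V → Set (V × Fin d) → Prop
  | bot : Build V d ⊥ ∅
  | add (G : SimpleGraph V) (U : Set (V × Fin d)) (u v : V) (c c' : Fin d) (h : Build V d G U)
      (hv : ∀ w, ¬ G.Adj v w) (huv : u ≠ v) (hvU : ∀ k, (v, k) ∉ U) (huc : (u, c) ∉ U)
      (huc' : (u, c') ∉ U) (hcc : c' ≠ c) :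
      Build V d (G ⊔ SimpleGraph.edge u v) (insert (u, c) (insert (v, c) U))

/-- The polynomial of an edge. -/
noncomputable def fpoly (K : Type) [Field K] (d : ℕ) (i j : V) : MvPolynomial (V × Fin d) K :=
  ∑ k : Fin d, MvPolynomial.X (i, k) * MvPolynomial.X (j, k)

/-- The set of generators. -/
def gens (K : Type) [Field K] (G : SimpleGraph V) (d : ℕ) : Set (MvPolynomial (V × Fin d) K) :=
  {f | ∃ i j : V, G.Adj i j ∧ f = fpoly K d i j}

variable (K : Type) [Field K]

lemma lssIdeal_eq (G : SimpleGraph V) : lssIdeal K G d = Ideal.span (gens K G d) := rfl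

lemma lssIdeal_bot : lssIdeal K (⊥ : SimpleGraph V) d = ⊥ := by
  rw [lssIdeal_eq, Ideal.span_eq_bot]
  rintro x ⟨i, j, h, -⟩
  exact h.elim

lemma fpoly_comm (i j : V) : fpoly K d i j = fpoly K d j i := by
  simp only [fpoly, mul_comm]

lemma lssIdeal_add (G : SimpleGraph V) {u v : V} (huv : u ≠ v) :
    lssIdeal K (G ⊔ SimpleGraph.edge u v) d = lssIdeal K G d ⊔ Ideal.span {fpoly K d u v} := by
  rw [lssIdeal_eq, lssIdeal_eq, ← Ideal.span_union]
  congr 1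
  ext f
  constructor
  · rintro ⟨i, j, h, rfl⟩
    rw [SimpleGraph.sup_adj, SimpleGraph.edge_adj] at h
    rcases h with h | ⟨⟨rfl, rfl⟩ | ⟨rfl, rfl⟩, -⟩
    · exact Or.inl ⟨i, j, h, rfl⟩
    · exact Or.inr rfl
    · exact Or.inr (fpoly_comm K _ _)
  · rintro (⟨i, j, h, rfl⟩ | h)
    · exact ⟨i, j, Or.inl h, rfl⟩
    · refine ⟨u, v, ?_, h⟩
      rw [SimpleGraph.sup_adj, SimpleGraph.edge_adj]
      exact Or.inr ⟨Or.inl ⟨rfl, rfl⟩, huv⟩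

lemma fpoly_supported {i j v : V} (c : Fin d) (hi : i ≠ v) (hj : j ≠ v) :
    fpoly K d i j ∈ supported K {s : V × Fin d | s ≠ (v, c)} := by
  refine Subalgebra.sum_mem _ fun k _ => Subalgebra.mul_mem _ ?_ ?_ <;>
  · rw [X_mem_supported]
    simp [hi, hj]

lemma gens_supported {G : SimpleGraph V} {v : V} (hv : ∀ w, ¬ G.Adj v w) (c : Fin d) :
    ∀ w ∈ gens K G d, w ∈ supported K {s : V × Fin d | s ≠ (v, c)} := by
  rintro _ ⟨i, j, h, rfl⟩
  apply fpoly_supported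
  · rintro rfl; exact hv _ h
  · rintro rfl; exact hv _ h.symm

lemma fpoly_split {u v : V} (huv : u ≠ v) (c : Fin d) :
    ∃ β ∈ supported K {s : V × Fin d | s ≠ (v, c)},
      fpoly K d u v = X (u, c) * X (v, c) + β := by
  refine ⟨∑ k ∈ Finset.univ.erase c, X (u, k) * X (v, k), ?_, ?_⟩
  · refine Subalgebra.sum_mem _ fun k hk => Subalgebra.mul_mem _ ?_ ?_ <;>
    · rw [X_mem_supported]
      simp [huv, Finset.ne_of_mem_erase hk]
  · exact (Finset.add_sum_erase _ _ (Finset.mem_univ c)).symm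

/-- The ideal with a set of variables added. -/
noncomputable def IT (G : SimpleGraph V) (T : Set (V × Fin d)) : Ideal (MvPolynomial (V × Fin d) K) :=
  lssIdeal K G d ⊔ Ideal.span (X '' T)

lemma IT_empty (G : SimpleGraph V) : IT K G (∅ : Set (V × Fin d)) = lssIdeal K G d := by
  simp [IT]

lemma IT_insert (G : SimpleGraph V) (T : Set (V × Fin d)) (t : V × Fin d) :
    IT K G (insert t T) = IT K G T ⊔ Ideal.span {X t} := by
  rw [IT, IT, Set.image_insert_eq, Ideal.span_insert, sup_assoc, sup_comm (Ideal.span {X t})]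

lemma isPrime_span_X {σ : Type} (T : Set σ) :
    (Ideal.span (X '' T) : Ideal (MvPolynomial σ K)).IsPrime := by
  classical
  set I : Ideal (MvPolynomial σ K) := Ideal.span (X '' T) with hI
  let φ : MvPolynomial σ K →ₐ[K] MvPolynomial σ K := aeval fun t => if t ∈ T then 0 else X t
  have hφ : (Ideal.Quotient.mkₐ K I).comp φ = Ideal.Quotient.mkₐ K I := by
    apply MvPolynomial.algHom_ext
    intro t
    by_cases ht : t ∈ T
    · have : (X t : MvPolynomial σ K) ∈ I := Ideal.subset_span ⟨t, ht, rfl⟩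
      simpa [φ, ht] using (Ideal.Quotient.eq_zero_iff_mem.mpr this).symm
    · simp [φ, ht]
  have hker : RingHom.ker φ.toRingHom = I := by
    apply le_antisymm
    · intro g hg
      have h1 : φ g = 0 := hg
      have h2 := AlgHom.congr_fun hφ g
      rw [AlgHom.comp_apply, h1, map_zero] at h2
      exact Ideal.Quotient.eq_zero_iff_mem.mp h2.symm
    · rw [hI, Ideal.span_le]
      rintro _ ⟨t, ht, rfl⟩
      change φ (X t) = 0
      simp [φ, ht]
  rw [← hker]
  exact RingHom.ker_isPrime _

theorem build_good {G : SimpleGraph V} {U : Set (V × Fin d)} (hB : Build V d G U) :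
    ∀ T : Set (V × Fin d), (∀ t ∈ T, t ∉ U) → (IT K G T).IsRadical ∧
      ∀ t, t ∉ T → t ∉ U → ∀ g, X t * g ∈ IT K G T → g ∈ IT K G T := by
  induction hB with
  | bot =>
    intro T _
    have hp : (IT K (⊥ : SimpleGraph V) T).IsPrime := by
      rw [IT, lssIdeal_bot, bot_sup_eq]
      exact isPrime_span_X K T
    refine ⟨hp.isRadical, fun t ht _ g hg => (hp.mem_or_mem hg).resolve_left fun h => ?_⟩
    rw [IT, lssIdeal_bot, bot_sup_eq, mem_ideal_span_X_image] at h
    obtain ⟨i, hi, h0⟩ := h (Finsupp.single t 1) (by simp [support_X])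
    rcases eq_or_ne t i with rfl | hne
    · exact ht hi
    · simp [hne] at h0
  | add G U u v c c' h hv huv hvU huc huc' hcc ih =>
    intro T hT
    simp only [Set.mem_insert_iff, not_or] at hT
    obtain ⟨A, _, π, hπ, hker, hX, hC⟩ := exists_split (K := K) (v, c)
      (gens K G d ∪ X '' T) (by
        rintro w (hw | ⟨t, ht, rfl⟩)
        · exact gens_supported K hv c w hw
        · rw [X_mem_supported]; exact (hT t ht).2.1)
    have hker' : RingHom.ker π = IT K G T := by
      rw [hker, Ideal.span_union, IT, lssIdeal_eq]
    have hJ : IT K (G ⊔ SimpleGraph.edge u v) T = RingHom.ker π ⊔ Ideal.span {fpoly K d u v} := by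
      rw [hker', IT, IT, lssIdeal_add K G huv, sup_right_comm]
    obtain ⟨β, hβ, hf⟩ := fpoly_split K huv c
    obtain ⟨b, hb⟩ := hC β hβ
    obtain ⟨a, ha⟩ := hC (X (u, c)) (by rw [X_mem_supported]; simp [huv])
    have hπf : π (fpoly K d u v) = Polynomial.C a * Polynomial.X + Polynomial.C b := by
      rw [hf, map_add, map_mul, ha, hX, hb]
    have ihT := ih T (fun t ht => (hT t ht).2.2)
    have ihT' := ih (insert (u, c) T) (by
      rintro t (rfl | ht)
      · exact huc
      · exact (hT t ht).2.2)
    rw [IT_insert, ← hker'] at ihT'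
    rw [← hker'] at ihT
    have hucT : (u, c) ∉ T := fun h => (hT _ h).1 rfl
    have h1 := ihT.2 (u, c) hucT huc
    rw [hJ]
    refine ⟨S_radical hπ ha hπf h1 ihT.1 ihT'.1, ?_⟩
    intro t ht htU
    simp only [Set.mem_insert_iff, not_or] at htU
    obtain ⟨x, hx⟩ := hC (X t) (by rw [X_mem_supported]; exact htU.2.1)
    refine S_nzd hπ ha hπf hx h1 (ihT.2 t ht htU.2.2) (ihT'.2 t ?_ htU.2.2)
    simp only [Set.mem_insert_iff, not_or]
    exact ⟨htU.1, ht⟩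

theorem build_normal {G : SimpleGraph V} {U : Set (V × Fin d)} (hB : Build V d G U) :
    ∃ _ : IsDomain (MvPolynomial (V × Fin d) K ⧸ lssIdeal K G d),
      IsIntegrallyClosed (MvPolynomial (V × Fin d) K ⧸ lssIdeal K G d) := by
  induction hB with
  | bot =>
    rw [lssIdeal_bot]
    let e := RingEquiv.quotientBot (MvPolynomial (V × Fin d) K)
    exact ⟨e.toMulEquiv.isDomain _, IsIntegrallyClosed.of_equiv e.symm⟩
  | add G U u v c c' h hv huv hvU huc huc' hcc ih =>
    obtain ⟨hdom, hic⟩ := ih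
    have hgood := build_good K h
    have hgood1 := build_good K (Build.add G U u v c c' h hv huv hvU huc huc' hcc)
    have hU1 : (u, c') ∉ insert (u, c) (insert (v, c) U) := by
      simp [hcc, huv, huc']
    obtain ⟨A, _, π, hπ, hker, hX, hC⟩ := exists_split (K := K) (v, c')
      (gens K G d) (gens_supported K hv c')
    rw [← lssIdeal_eq] at hker
    let e : (MvPolynomial (V × Fin d) K ⧸ lssIdeal K G d) ≃+* Polynomial A :=
      (Ideal.quotEquivOfEq hker.symm).trans (RingHom.quotientKerEquivOfSurjective hπ)
    have : IsDomain (Polynomial A) := e.symm.toMulEquiv.isDomain _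
    have : IsIntegrallyClosed (Polynomial A) := IsIntegrallyClosed.of_equiv e
    have : IsDomain A := Polynomial.C_injective.isDomain (Polynomial.C : A →+* Polynomial A)
    have : IsIntegrallyClosed A := isIntegrallyClosed_of_polynomial
    obtain ⟨β, hβ, hf⟩ := fpoly_split K huv c'
    obtain ⟨b, hb⟩ := hC β hβ
    obtain ⟨a, ha⟩ := hC (X (u, c')) (by rw [X_mem_supported]; simp [huv])
    have hπf : π (fpoly K d u v) = Polynomial.C a * Polynomial.X + Polynomial.C b := by
      rw [hf, map_add, map_mul, ha, hX, hb]
    have ha0 : a ≠ 0 := by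
      rintro rfl
      have h1 := (hgood ∅ (by simp)).2 (u, c') (by simp) huc' 1
      rw [IT_empty, ← hker, mul_one, RingHom.mem_ker, RingHom.mem_ker, map_one] at h1
      exact one_ne_zero (h1 (by rw [ha, map_zero]))
    refine normal_step hπ ha0 ha hπf _ (by rw [hker, lssIdeal_add K G huv]) ?_ ?_
    · have := (hgood1 ∅ (by simp)).2 (u, c') (by simp) hU1
      rwa [IT_empty] at this
    · have := (hgood1 (insert (u, c') ∅) (by
        rintro t (rfl | ht)
        · exact hU1
        · exact ht.elim)).1
      rwa [IT_insert, IT_empty] at this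

lemma exists_leaf [Finite V] (G : SimpleGraph V) (hG : G.IsAcyclic) (hne : G ≠ ⊥) :
    ∃ u v, G.Adj v u ∧ ∀ w, G.Adj v w → w = u := by
  classical
  have := Fintype.ofFinite V
  obtain ⟨x, y, hxy⟩ : ∃ x y, G.Adj x y := by
    by_contra! hcon
    apply hne
    ext x y
    simp [hcon]
  let P : ℕ → Prop := fun m => ∃ (x y : V) (p : G.Walk x y), p.IsPath ∧ p.length = m
  have hP1 : P 1 := ⟨x, y, hxy.toWalk, by simp [SimpleGraph.Adj.toWalk, hxy.ne], rfl⟩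
  have hcard : 1 ≤ Fintype.card V := Fintype.card_pos_iff.mpr ⟨x⟩
  have hmax := Nat.findGreatest_spec (P := P) hcard hP1
  have hle : 1 ≤ Nat.findGreatest P (Fintype.card V) := Nat.le_findGreatest hcard hP1
  obtain ⟨v, y, p, hp, hlen⟩ := hmax
  have hnn : ¬ p.Nil := by
    rw [← SimpleGraph.Walk.length_eq_zero_iff]; omega
  refine ⟨p.snd, v, p.adj_snd hnn, fun w hw => ?_⟩
  by_cases hws : w ∈ p.support
  · exact hG.eq_snd_of_adj_start hp hw hws
  · exfalso
    have hq : (SimpleGraph.Walk.cons hw.symm p).IsPath := hp.cons hws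
    have := Nat.le_findGreatest (P := P) (hq.length_lt.le) ⟨_, _, _, hq, rfl⟩
    rw [SimpleGraph.Walk.length_cons, hlen] at this
    omega

theorem exists_build [Finite V] (m : ℕ) : ∀ (G : SimpleGraph V), G.edgeSet.ncard = m →
    G.IsAcyclic → (∀ v, (G.neighborSet v).ncard < d) →
    ∃ U, Build V d G U ∧ ∀ v, {k | (v, k) ∈ U}.ncard ≤ (G.neighborSet v).ncard := by
  classical
  induction m with
  | zero =>
    intro G hm _ _
    rw [Set.ncard_eq_zero, SimpleGraph.edgeSet_eq_empty] at hm
    subst hm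
    exact ⟨∅, Build.bot, by simp⟩
  | succ m ih =>
    intro G hm hG hd
    obtain ⟨u, v, hvu, hleaf⟩ := exists_leaf G hG (by
      rintro rfl
      simp at hm)
    have huv : u ≠ v := hvu.ne'
    set G' := G.deleteEdges {s(u, v)} with hG'
    have hsup : G' ⊔ SimpleGraph.edge u v = G := by
      ext x y
      rw [SimpleGraph.sup_adj, SimpleGraph.edge_adj, hG', SimpleGraph.deleteEdges_adj]
      simp only [Set.mem_singleton_iff, Sym2.eq_iff]
      constructor
      · rintro (h | ⟨⟨rfl, rfl⟩ | ⟨rfl, rfl⟩, -⟩)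
        · exact h.1
        · exact hvu.symm
        · exact hvu
      · intro h
        have := h.ne
        tauto
    have hle : G' ≤ G := G.deleteEdges_le _
    have hm' : G'.edgeSet.ncard = m := by
      have h1 : s(u, v) ∈ G.edgeSet := hvu.symm
      have := Set.ncard_sdiff_singleton_add_one h1 (Set.toFinite _)
      rw [hG', SimpleGraph.edgeSet_deleteEdges]
      omega
    have hsub : ∀ w, G'.neighborSet w ⊆ G.neighborSet w := fun w x hx => hle hx
    have hnle : ∀ w, (G'.neighborSet w).ncard ≤ (G.neighborSet w).ncard := fun w =>
      Set.ncard_le_ncard (hsub w) (Set.toFinite _)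
    have hlt : ∀ w x, G.Adj w x → ¬ G'.Adj w x →
        (G'.neighborSet w).ncard < (G.neighborSet w).ncard := fun w x h1 h2 =>
      Set.ncard_lt_ncard ⟨hsub w, fun h => h2 (h h1)⟩ (Set.toFinite _)
    have hltu := hlt u v hvu.symm (by simp [hG'])
    have hltv := hlt v u hvu (by simp [hG', Sym2.eq_swap])
    obtain ⟨U, hB, hU⟩ := ih G' hm' (hG.anti hle) (fun w => (hnle w).trans_lt (hd w))
    have hv : ∀ w, ¬ G'.Adj v w := by
      intro w hw
      have := hleaf w (hle hw)
      subst this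
      simp [hG', Sym2.eq_swap] at hw
    have hvU : ∀ k, (v, k) ∉ U := by
      have h0 : G'.neighborSet v = ∅ := by
        ext w; simpa using hv w
      have := hU v
      rw [h0, Set.ncard_empty, Nat.le_zero, Set.ncard_eq_zero] at this
      intro k hk
      exact (this ▸ hk : k ∈ (∅ : Set (Fin d)))
    have hUu := hU u
    have hdu := hd u
    have htwo : 1 < ({k | (u, k) ∈ U}ᶜ : Set (Fin d)).ncard := by
      have := Set.ncard_add_ncard_compl {k | (u, k) ∈ U}
      rw [Nat.card_fin] at this
      omega
    obtain ⟨c, hc, c', hc', hcc⟩ := (Set.one_lt_ncard (Set.toFinite _)).mp htwo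
    refine ⟨insert (u, c) (insert (v, c) U), ?_, ?_⟩
    · have := Build.add G' U u v c c' hB hv huv hvU hc hc' hcc.symm
      rwa [hsup] at this
    · intro w
      rcases eq_or_ne w u with rfl | hwu
      · have : {k | (w, k) ∈ insert (w, c) (insert (v, c) U)} = insert c {k | (w, k) ∈ U} := by
          ext k; simp [huv]
        rw [this]
        exact (Set.ncard_insert_le _ _).trans (by omega)
      rcases eq_or_ne w v with rfl | hwv
      · have : {k | (w, k) ∈ insert (u, c) (insert (w, c) U)} = insert c {k | (w, k) ∈ U} := by
          ext k; simp [huv.symm]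
        rw [this]
        have := hU w
        exact (Set.ncard_insert_le _ _).trans (by omega)
      · have : {k | (w, k) ∈ insert (u, c) (insert (v, c) U)} = {k | (w, k) ∈ U} := by
          ext k; simp [hwu, hwv]
        rw [this]
        exact (hU w).trans (hnle w)

end graph

end LSSAux

/-- If `G` is a forest and `d ≥ Δ(G) + 1` then the LSS ring `R_G(d)` is a normal domain,
i.e. an integral domain that is integrally closed in its field of fractions. -/
theorem lss_ring_forest_normal (K : Type) [Field K] (n d : ℕ) (G : SimpleGraph (Fin n))
    [DecidableRel G.Adj] (hforest : G.IsAcyclic) (hd : G.maxDegree + 1 ≤ d) :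
    ∃ _ : IsDomain (MvPolynomial (Fin n × Fin d) K ⧸ lssIdeal K G d),
      IsIntegrallyClosed (MvPolynomial (Fin n × Fin d) K ⧸ lssIdeal K G d) := by
  obtain ⟨U, hB, -⟩ := LSSAux.exists_build (d := d) _ G rfl hforest (fun v => by
    have h1 := G.degree_le_maxDegree v
    have h2 : (G.neighborSet v).ncard = G.degree v := by
      rw [Set.ncard_eq_toFinset_card', SimpleGraph.degree, SimpleGraph.neighborFinset]
    omega)
  exact LSSAux.build_normal K hB
end
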